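/- arXiv:1302.4285 — 3 statements merged into one kernel-verified Lean document; each statement's English description precedes it below -/
import Mathlib

section
/- For all positive integers a, b, c, d, the value ζ₂(2a, b, b, 2c−1, d, d; G₂) belongs to the ℚ-subalgebra of ℝ generated by the Riemann zeta values {ζ(j) : j an integer, j ≥ 2}. -/
/-- The zeta-function of the root system `G₂` at a tuple of natural number exponents:
`ζ₂(s₁,…,s₆;G₂) = ∑_{m,n≥1} 1/(m^{s₁} n^{s₂} (m+n)^{s₃} (m+2n)^{s₄} (m+3n)^{s₅} (2m+3n)^{s₆})`. -/
noncomputable def zetaG2 (s₁ s₂ s₃ s₄ s₅ s₆ : ℕ) : ℝ :=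
  ∑' (m : ℕ+) (n : ℕ+),
    1 / (((m : ℕ) : ℝ) ^ s₁ * ((n : ℕ) : ℝ) ^ s₂ * (((m : ℕ) : ℝ) + ((n : ℕ) : ℝ)) ^ s₃ *
      (((m : ℕ) : ℝ) + 2 * ((n : ℕ) : ℝ)) ^ s₄ * (((m : ℕ) : ℝ) + 3 * ((n : ℕ) : ℝ)) ^ s₅ *
      (2 * ((m : ℕ) : ℝ) + 3 * ((n : ℕ) : ℝ)) ^ s₆)


/-- The real values of the Riemann zeta function at integers `j ≥ 2`. -/
def zetaValues : Set ℝ := {x : ℝ | ∃ j : ℕ, 2 ≤ j ∧ (x : ℂ) = riemannZeta j}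

open Filter Topology

/-- The series `f` converges absolutely, with sum in the algebra of zeta values. -/
def ZS {α : Type} (f : α → ℝ) : Prop := ∃ x ∈ Algebra.adjoin ℚ zetaValues, HasSum f x

theorem ZS.summable {α : Type} {f : α → ℝ} (h : ZS f) : Summable f := by
  obtain ⟨x, _, hx⟩ := h
  exact hx.summable

theorem ZS.add {α : Type} {f g : α → ℝ} (hf : ZS f) (hg : ZS g) : ZS (fun a => f a + g a) := by
  obtain ⟨x, hx, hx'⟩ := hf
  obtain ⟨y, hy, hy'⟩ := hg
  exact ⟨x + y, add_mem hx hy, hx'.add hy'⟩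

theorem ZS.mul_left {α : Type} {f : α → ℝ} (hf : ZS f) {c : ℝ}
    (hc : c ∈ Algebra.adjoin ℚ zetaValues) : ZS (fun a => c * f a) := by
  obtain ⟨x, hx, hx'⟩ := hf
  exact ⟨c * x, mul_mem hc hx, hx'.mul_left c⟩

theorem rat_mem (q : ℚ) : (q : ℝ) ∈ Algebra.adjoin ℚ zetaValues :=
  (Algebra.adjoin ℚ zetaValues).algebraMap_mem q

theorem ZS.rat {α : Type} {f : α → ℝ} (hf : ZS f) (q : ℚ) : ZS (fun a => (q : ℝ) * f a) :=
  hf.mul_left (rat_mem q)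

theorem ZS.sub {α : Type} {f g : α → ℝ} (hf : ZS f) (hg : ZS g) : ZS (fun a => f a - g a) := by
  obtain ⟨x, hx, hx'⟩ := hf
  obtain ⟨y, hy, hy'⟩ := hg
  exact ⟨x - y, sub_mem hx hy, hx'.sub hy'⟩

theorem ZS.congr {α : Type} {f g : α → ℝ} (hf : ZS f) (h : ∀ a, g a = f a) : ZS g := by
  have : g = f := funext h
  rwa [this]

theorem ZS.zero {α : Type} : ZS (fun _ : α => (0 : ℝ)) := ⟨0, zero_mem _, hasSum_zero⟩

theorem ZS.sum {α : Type} (s : Finset ℕ) {f : ℕ → α → ℝ} (h : ∀ i ∈ s, ZS (f i)) :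
    ZS (fun a => ∑ i ∈ s, f i a) := by
  induction s using Finset.induction_on with
  | empty => simpa using ZS.zero
  | insert i s hi ih =>
    refine ((h i (Finset.mem_insert_self _ _)).add
      (ih fun k hk => h k (Finset.mem_insert_of_mem hk))).congr fun a => ?_
    rw [Finset.sum_insert hi]

theorem ZS.inj {α β : Type} {f : β → ℝ} (hf : ZS f) {g : α → β} (hg : Function.Injective g)
    (h : ∀ x, x ∉ Set.range g → f x = 0) : ZS (fun a => f (g a)) := by
  obtain ⟨x, hx, hx'⟩ := hf
  exact ⟨x, hx, (hg.hasSum_iff h).2 hx'⟩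

theorem ZS.of_fiber {α β : Type} {f : α × β → ℝ} (hf : Summable f) {g : α → ℝ}
    (h : ∀ a, HasSum (fun b => f (a, b)) (g a)) (hg : ZS g) : ZS f := by
  obtain ⟨x, hx, hx'⟩ := hg
  have := hf.hasSum.prod_fiberwise h
  exact ⟨x, hx, by rw [hx'.unique this]; exact hf.hasSum⟩

theorem ZS.fiber {α β : Type} {f : α × β → ℝ} (hf : ZS f) {g : α → ℝ}
    (h : ∀ a, HasSum (fun b => f (a, b)) (g a)) : ZS g := by
  obtain ⟨x, hx, hx'⟩ := hf
  exact ⟨x, hx, hx'.prod_fiberwise h⟩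

theorem ZS.swap {α β : Type} {f : α × β → ℝ} (hf : ZS f) : ZS (fun p : β × α => f (p.2, p.1)) := by
  obtain ⟨x, hx, hx'⟩ := hf
  exact ⟨x, hx, (Equiv.prodComm β α).hasSum_iff.2 hx'⟩

theorem ZS.of_antidiagonal {f : ℕ × ℕ → ℝ} (hf : Summable f)
    (hg : ZS (fun n => ∑ p ∈ Finset.HasAntidiagonal.antidiagonal n, f p)) : ZS f := by
  obtain ⟨x, hx, hx'⟩ := hg
  obtain ⟨y, hy⟩ := hf
  have h1 := (Finset.HasAntidiagonal.sigmaAntidiagonalEquivProd (A := ℕ)).hasSum_iff.2 hy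
  have h2 := h1.sigma (g := fun n => ∑ p ∈ Finset.HasAntidiagonal.antidiagonal n, f p) (fun n => by
    have := Finset.hasSum (Finset.HasAntidiagonal.antidiagonal n) f
    exact this)
  rw [hx'.unique h2] at hx
  exact ⟨y, hx, hy⟩

theorem ZS_zeta {s : ℕ} (hs : 2 ≤ s) : ZS (fun n : ℕ => ((n : ℝ)⁻¹) ^ s) := by
  have hsum : Summable (fun n : ℕ => ((n : ℝ)⁻¹) ^ s) := by
    simpa using (Real.summable_nat_pow_inv (p := s)).2 (by omega)
  refine ⟨_, Algebra.subset_adjoin ⟨s, hs, ?_⟩, hsum.hasSum⟩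
  rw [zeta_nat_eq_tsum_of_gt_one (by omega), Complex.ofReal_tsum]
  congr 1; funext n; simp

theorem ZS_zeta_sign {s : ℕ} (hs : 2 ≤ s) {e : ℝ} (he : e = 1 ∨ e = -1) :
    ZS (fun n : ℕ => e ^ n * ((n : ℝ)⁻¹) ^ s) := by
  rcases he with rfl | rfl
  · simpa using ZS_zeta hs
  -- even part
  have h1 : ZS (fun n : ℕ => if Even n then ((n : ℝ)⁻¹) ^ s else 0) := by
    obtain ⟨x, hx, hx'⟩ := (ZS_zeta hs).rat ((1/2) ^ s)
    refine ⟨x, hx, ?_⟩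
    have hi : Function.Injective (fun n : ℕ => 2 * n) := fun a b h => by simpa using h
    refine (hi.hasSum_iff ?_).1 ?_
    · intro n hn
      rw [if_neg]
      rintro ⟨k, rfl⟩
      exact hn ⟨k, by simp; ring⟩
    · convert hx' using 1
      funext n
      simp [mul_pow]
      ring
  refine ((h1.rat 2).sub (ZS_zeta hs)).congr fun n => ?_
  rcases Nat.even_or_odd n with h | h
  · simp [h, h.neg_one_pow]; ring
  · simp [Nat.not_even_iff_odd.2 h, h.neg_one_pow]

/-- `φ` is good if all twisted sums with `m^{-s}`, `s ≥ 1`, are in the algebra. -/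
def Good (φ : ℕ → ℝ) : Prop := ∀ s : ℕ, 1 ≤ s → ZS (fun m : ℕ => ((m : ℝ)⁻¹) ^ s * φ m)

theorem Good.add {φ ψ : ℕ → ℝ} (h : Good φ) (h' : Good ψ) : Good (fun m => φ m + ψ m) :=
  fun s hs => ((h s hs).add (h' s hs)).congr fun m => by ring

theorem Good.sub {φ ψ : ℕ → ℝ} (h : Good φ) (h' : Good ψ) : Good (fun m => φ m - ψ m) :=
  fun s hs => ((h s hs).sub (h' s hs)).congr fun m => by ring

theorem Good.mul_left {φ : ℕ → ℝ} (h : Good φ) {c : ℝ}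
    (hc : c ∈ Algebra.adjoin ℚ zetaValues) : Good (fun m => c * φ m) :=
  fun s hs => ((h s hs).mul_left hc).congr fun m => by ring

theorem Good.inv_mul {φ : ℕ → ℝ} (h : Good φ) : Good (fun m => (m : ℝ)⁻¹ * φ m) :=
  fun s _ => (h (s + 1) (by omega)).congr fun m => by ring

theorem Good.congr {φ ψ : ℕ → ℝ} (h : Good φ) (h' : ∀ m, 1 ≤ m → ψ m = φ m) : Good ψ :=
  fun s hs => (h s hs).congr fun m => by
    rcases Nat.eq_zero_or_pos m with rfl | hm
    · simp [show s ≠ 0 by omega]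
    · rw [h' m hm]

theorem Good_pow {i : ℕ} (hi : 1 ≤ i) : Good (fun m => ((m : ℝ)⁻¹) ^ i) :=
  fun s hs => (ZS_zeta (s := s + i) (by omega)).congr fun m => by ring

theorem Good_sign {i : ℕ} (hi : 1 ≤ i) {e : ℝ} (he : e = 1 ∨ e = -1) :
    Good (fun m => e ^ m * ((m : ℝ)⁻¹) ^ i) :=
  fun s hs => (ZS_zeta_sign (s := s + i) (by omega) he).congr fun m => by ring

theorem abs_inv_int_le (k : ℤ) : |((k : ℝ)⁻¹)| ≤ 1 := by
  rcases eq_or_ne k 0 with rfl | hk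
  · simp
  · rw [abs_inv]
    apply inv_le_one_of_one_le₀
    exact_mod_cast Int.one_le_abs hk

theorem abs_pow_le_pow {x : ℝ} (hx : |x| ≤ 1) {a b : ℕ} (h : b ≤ a) : |x ^ a| ≤ |x| ^ b := by
  rw [abs_pow]
  exact pow_le_pow_of_le_one (abs_nonneg x) hx h

theorem summable_int_inv_sq : Summable (fun k : ℤ => ((k : ℝ)⁻¹) ^ 2) := by
  simpa using (Real.summable_one_div_int_pow (p := 2)).2 (by norm_num)

theorem two_factor_bound {x y : ℝ} (hx : |x| ≤ 1) (hy : |y| ≤ 1) {a b : ℕ} (ha : 1 ≤ a)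
    (hb : 1 ≤ b) : |x ^ a * y ^ b| ≤ x ^ 2 + y ^ 2 := by
  rw [abs_mul]
  have h1 := abs_pow_le_pow hx ha
  have h2 := abs_pow_le_pow hy hb
  have h3 : |x ^ a| * |y ^ b| ≤ |x| ^ 1 * |y| ^ 1 := by gcongr
  rw [← sq_abs x, ← sq_abs y]
  nlinarith [sq_nonneg (|x| - |y|), sq_nonneg (|x|), sq_nonneg (|y|)]

theorem three_factor_bound {x y z : ℝ} (hx : |x| ≤ 1) (hy : |y| ≤ 1) (hz : |z| ≤ 1) {a b c : ℕ}
    (ha : 1 ≤ a) (hb : 1 ≤ b) (hc : 1 ≤ c) (h : 4 ≤ a + b + c) :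
    |x ^ a * y ^ b * z ^ c| ≤ x ^ 2 * y ^ 2 + x ^ 2 * z ^ 2 + y ^ 2 * z ^ 2 := by
  have key : ∀ {x y z : ℝ}, |x| ≤ 1 → |y| ≤ 1 → |z| ≤ 1 → ∀ {a b c : ℕ}, 2 ≤ a → 1 ≤ b → 1 ≤ c →
      |x ^ a * y ^ b * z ^ c| ≤ x ^ 2 * y ^ 2 + x ^ 2 * z ^ 2 := by
    intro x y z hx hy hz a b c ha hb hc
    rw [mul_assoc, abs_mul]
    have h1 := abs_pow_le_pow hx ha
    have h2 := two_factor_bound hy hz hb hc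
    rw [sq_abs] at h1
    calc |x ^ a| * |y ^ b * z ^ c| ≤ x ^ 2 * (y ^ 2 + z ^ 2) := by gcongr
      _ = _ := by ring
  have p1 : 0 ≤ x ^ 2 * y ^ 2 := by positivity
  have p2 : 0 ≤ x ^ 2 * z ^ 2 := by positivity
  have p3 : 0 ≤ y ^ 2 * z ^ 2 := by positivity
  rcases (by omega : 2 ≤ a ∨ 2 ≤ b ∨ 2 ≤ c) with h | h | h
  · linarith [key hx hy hz h hb hc]
  · have := key hy hx hz h ha hc
    rw [mul_comm (y ^ b)] at this
    linarith
  · have := key hz hx hy h ha hb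
    rw [mul_assoc, mul_comm (z ^ c)] at this
    linarith

theorem summable_two (m : ℤ) {a b : ℕ} (ha : 1 ≤ a) (hb : 1 ≤ b) {w : ℤ → ℝ} (hw : ∀ k, |w k| = 1) :
    Summable (fun k : ℤ => w k * (((k : ℝ)⁻¹) ^ a * (((m : ℝ) - k)⁻¹) ^ b)) := by
  have h1 : Summable (fun k : ℤ => ((((m - k : ℤ)) : ℝ)⁻¹) ^ 2) :=
    summable_int_inv_sq.comp_injective (i := fun k : ℤ => m - k) (fun a b h => by simpa using h)
  refine Summable.of_norm_bounded (summable_int_inv_sq.add h1) fun k => ?_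
  rw [Real.norm_eq_abs, abs_mul, hw, one_mul]
  have := two_factor_bound (abs_inv_int_le k) (abs_inv_int_le (m - k)) ha hb
  simpa using this

theorem summable_three {a b c : ℕ} (ha : 1 ≤ a) (hb : 1 ≤ b) (hc : 1 ≤ c) (h : 4 ≤ a + b + c)
    {w : ℤ → ℝ} (hw : ∀ k, |w k| = 1) :
    Summable (fun p : ℕ × ℤ => w p.2 * (((p.1 : ℝ)⁻¹) ^ a * ((p.2 : ℝ)⁻¹) ^ b *
      (((p.1 : ℝ) - p.2)⁻¹) ^ c)) := by
  have h0 : Summable (fun p : ℤ × ℤ => ((p.1 : ℝ)⁻¹) ^ 2 * ((p.2 : ℝ)⁻¹) ^ 2) :=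
    summable_int_inv_sq.mul_of_nonneg summable_int_inv_sq (fun _ => by positivity)
      (fun _ => by positivity)
  have i1 := h0.comp_injective (i := fun p : ℕ × ℤ => ((p.1 : ℤ), p.2)) (by
    rintro ⟨a, b⟩ ⟨c, d⟩ h; simp at h ⊢; omega)
  have i2 := h0.comp_injective (i := fun p : ℕ × ℤ => ((p.1 : ℤ), (p.1 : ℤ) - p.2)) (by
    rintro ⟨a, b⟩ ⟨c, d⟩ h; simp at h ⊢; omega)
  have i3 := h0.comp_injective (i := fun p : ℕ × ℤ => (p.2, (p.1 : ℤ) - p.2)) (by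
    rintro ⟨a, b⟩ ⟨c, d⟩ h; simp at h ⊢; omega)
  refine Summable.of_norm_bounded ((i1.add i2).add i3) fun p => ?_
  rw [Real.norm_eq_abs, abs_mul, hw, one_mul]
  have := three_factor_bound (abs_inv_int_le p.1) (abs_inv_int_le p.2) (abs_inv_int_le (p.1 - p.2))
    ha hb hc h
  simpa using this

theorem shift_sub_tendsto {f : ℤ → ℝ} (hf : Tendsto (fun M : ℕ => f M) atTop (𝓝 0)) (n : ℕ) :
    Tendsto (fun M : ℕ => ∑ m ∈ Finset.range M, (f ((m : ℤ) - n) - f m)) atTop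
      (𝓝 (∑ i ∈ Finset.range n, f (-1 - i))) := by
  have h1 : ∀ M : ℕ, ∑ m ∈ Finset.range M, (f ((m : ℤ) - n) - f m) =
      ∑ i ∈ Finset.range n, (f (-1 - i) - f ((M : ℤ) - 1 - i)) := by
    intro M
    induction M with
    | zero => simp
    | succ M ih =>
      rw [Finset.sum_range_succ, ih]
      have : f ((M : ℤ) - n) - f M =
          ∑ i ∈ Finset.range n, (f ((M : ℤ) - ((i + 1 : ℕ) : ℤ)) - f ((M : ℤ) - (i : ℤ))) := by
        rw [Finset.sum_range_sub (fun i : ℕ => f ((M : ℤ) - (i : ℤ)))]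
        simp
      rw [this, ← Finset.sum_add_distrib]
      refine Finset.sum_congr rfl fun i _ => ?_
      have e1 : (M : ℤ) - ((i + 1 : ℕ) : ℤ) = (M : ℤ) - 1 - i := by push_cast; ring
      have e2 : ((M + 1 : ℕ) : ℤ) - 1 - i = (M : ℤ) - i := by push_cast; ring
      rw [e1, e2]; ring
  simp_rw [h1]
  refine tendsto_finsetSum _ fun i _ => ?_
  have : Tendsto (fun M : ℕ => f ((M : ℤ) - 1 - i)) atTop (𝓝 0) := by
    refine ((tendsto_add_atTop_iff_nat (i + 1)).1 ?_)
    refine hf.congr fun M => ?_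
    congr 1; push_cast; ring
  simpa using (tendsto_const_nhds (x := f (-1 - i))).sub this

theorem shift_add_tendsto {f : ℤ → ℝ} (hf : Tendsto (fun M : ℕ => f M) atTop (𝓝 0)) (n : ℕ) :
    Tendsto (fun M : ℕ => ∑ m ∈ Finset.range M, (f ((m : ℤ) + n) - f m)) atTop
      (𝓝 (-∑ i ∈ Finset.range n, f i)) := by
  have h1 : ∀ M : ℕ, ∑ m ∈ Finset.range M, (f ((m : ℤ) + n) - f m) =
      ∑ i ∈ Finset.range n, (f ((M : ℤ) + i) - f i) := by
    intro M
    induction M with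
    | zero => simp
    | succ M ih =>
      rw [Finset.sum_range_succ, ih]
      have : f ((M : ℤ) + n) - f M =
          ∑ i ∈ Finset.range n, (f ((M : ℤ) + ((i + 1 : ℕ) : ℤ)) - f ((M : ℤ) + (i : ℤ))) := by
        rw [Finset.sum_range_sub (fun i : ℕ => f ((M : ℤ) + (i : ℤ)))]
        simp
      rw [this, ← Finset.sum_add_distrib]
      refine Finset.sum_congr rfl fun i _ => ?_
      have e1 : (M : ℤ) + ((i + 1 : ℕ) : ℤ) = ((M + 1 : ℕ) : ℤ) + i := by push_cast; ring
      rw [e1]; ring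
  simp_rw [h1]
  rw [← Finset.sum_neg_distrib]
  refine tendsto_finsetSum _ fun i _ => ?_
  have : Tendsto (fun M : ℕ => f ((M : ℤ) + i)) atTop (𝓝 0) := by
    refine (((tendsto_add_atTop_iff_nat i).2 hf)).congr fun M => ?_
    congr 1
  simpa using this.sub (tendsto_const_nhds (x := f i))

theorem hs_congr {α : Type} {f g : α → ℝ} {x : ℝ} (h : HasSum g x) (hfg : ∀ a, f a = g a) :
    HasSum f x := by
  have : f = g := funext hfg
  rwa [this]

theorem pf_two {x y m : ℝ} (hx : x ≠ 0) (hy : y ≠ 0) (hm : m ≠ 0) (h : x + y = m) :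
    x⁻¹ * y⁻¹ = m⁻¹ * (x⁻¹ + y⁻¹) := by
  field_simp
  linarith

section sign
variable {e : ℝ}

theorem sgn_ne (he : e = 1 ∨ e = -1) : e ≠ 0 := by
  rcases he with rfl | rfl <;> norm_num

theorem sgn_abs (he : e = 1 ∨ e = -1) (k : ℤ) : |e ^ k| = 1 := by
  rcases he with rfl | rfl <;> simp [abs_zpow]

theorem sgn_neg (he : e = 1 ∨ e = -1) (k : ℤ) : e ^ (-k) = e ^ k := by
  rw [← inv_zpow']
  rcases he with rfl | rfl <;> norm_num

theorem sgn_sub (he : e = 1 ∨ e = -1) (m k : ℤ) : e ^ (m - k) = e ^ m * e ^ k := by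
  rw [sub_eq_add_neg, zpow_add₀ (sgn_ne he), sgn_neg he]

theorem sgn_add (he : e = 1 ∨ e = -1) (m k : ℤ) : e ^ (m + k) = e ^ m * e ^ k := by
  rw [zpow_add₀ (sgn_ne he)]

theorem sgn_sq (he : e = 1 ∨ e = -1) (m : ℤ) : e ^ m * e ^ m = 1 := by
  rw [← sgn_sub he, sub_self, zpow_zero]

theorem sgn_sq_nat (he : e = 1 ∨ e = -1) (m : ℕ) : e ^ m * e ^ m = 1 := by
  have := sgn_sq he m
  simpa using this
end sign

/-- Sum over all integers of `e^k k^{-p}`. -/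
noncomputable def Cc (e : ℝ) (p : ℕ) : ℝ := ∑' k : ℤ, e ^ k * ((k : ℝ)⁻¹) ^ p

theorem Cc_summable {e : ℝ} (he : e = 1 ∨ e = -1) {p : ℕ} (hp : 2 ≤ p) :
    Summable (fun k : ℤ => e ^ k * ((k : ℝ)⁻¹) ^ p) := by
  refine Summable.of_norm_bounded summable_int_inv_sq fun k => ?_
  rw [Real.norm_eq_abs, abs_mul, sgn_abs he, one_mul]
  simpa using abs_pow_le_pow (abs_inv_int_le k) hp

theorem Cc_mem {e : ℝ} (he : e = 1 ∨ e = -1) {p : ℕ} (hp : 2 ≤ p) :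
    Cc e p ∈ Algebra.adjoin ℚ zetaValues := by
  have h1 := (Cc_summable he hp).hasSum.nat_add_neg
  obtain ⟨x, hx, hx'⟩ := ((ZS_zeta_sign hp he).rat (1 + (-1) ^ p))
  have : Cc e p = x := by
    refine HasSum.unique ?_ hx'
    convert h1 using 1
    · funext n
      simp only [sgn_neg he]
      push_cast
      rw [zpow_natCast, inv_neg, neg_pow (n : ℝ)⁻¹]
      ring
    · simp [Cc, show p ≠ 0 by omega]
  rwa [this]

/-- Sum over all integers of `e^k k^{-p} (m-k)^{-j}`. -/
noncomputable def Psi (e : ℝ) (p j : ℕ) (m : ℕ) : ℝ :=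
  ∑' k : ℤ, e ^ k * (((k : ℝ)⁻¹) ^ p * (((m : ℝ) - k)⁻¹) ^ j)

theorem Psi_hasSum {e : ℝ} (he : e = 1 ∨ e = -1) {p j : ℕ} (hp : 1 ≤ p) (hj : 1 ≤ j) (m : ℕ) :
    HasSum (fun k : ℤ => e ^ k * (((k : ℝ)⁻¹) ^ p * (((m : ℝ) - k)⁻¹) ^ j)) (Psi e p j m) := by
  have := summable_two m hp hj (w := fun k => e ^ k) (sgn_abs he)
  exact Summable.hasSum (by simpa using this)

theorem Psi_rec {e : ℝ} (he : e = 1 ∨ e = -1) {p j : ℕ} (hp : 1 ≤ p) (hj : 1 ≤ j) {m : ℕ}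
    (hm : 1 ≤ m) :
    Psi e (p + 1) (j + 1) m = (m : ℝ)⁻¹ * (Psi e (p + 1) j m + Psi e p (j + 1) m) := by
  refine (Psi_hasSum he (by omega) (by omega) m).unique ?_
  refine hs_congr (((Psi_hasSum he (p := p + 1) (by omega) hj m).add
    (Psi_hasSum he hp (j := j + 1) (by omega) m)).mul_left ((m : ℝ)⁻¹)) fun k => ?_
  have hm' : (m : ℝ) ≠ 0 := by positivity
  rcases eq_or_ne k 0 with rfl | hk
  · simp [show p ≠ 0 by omega]
  have hk' : (k : ℝ) ≠ 0 := by exact_mod_cast hk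
  rcases eq_or_ne ((m : ℝ) - k) 0 with h | h
  · simp [h, show j ≠ 0 by omega]
  · have := pf_two hk' h hm' (by ring)
    linear_combination (e ^ k * (k : ℝ)⁻¹ ^ p * ((m : ℝ) - k)⁻¹ ^ j) * this

theorem Psi_rec_one_right {e : ℝ} (he : e = 1 ∨ e = -1) {p : ℕ} (hp : 1 ≤ p) {m : ℕ}
    (hm : 1 ≤ m) :
    Psi e (p + 1) 1 m =
      (m : ℝ)⁻¹ * (Cc e (p + 1) - e ^ m * ((m : ℝ)⁻¹) ^ (p + 1) + Psi e p 1 m) := by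
  refine (Psi_hasSum he (by omega) (by omega) m).unique ?_
  refine hs_congr (((((Cc_summable he (p := p + 1) (by omega)).hasSum).sub
    (hasSum_ite_eq (m : ℤ) (e ^ m * ((m : ℝ)⁻¹) ^ (p + 1)))).add
    (Psi_hasSum he hp (j := 1) (by omega) m)).mul_left ((m : ℝ)⁻¹)) fun k => ?_
  have hm' : (m : ℝ) ≠ 0 := by positivity
  rcases eq_or_ne k 0 with rfl | hk
  · simp [show p ≠ 0 by omega, show (0 : ℤ) ≠ m by omega]
  have hk' : (k : ℝ) ≠ 0 := by exact_mod_cast hk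
  rcases eq_or_ne k m with rfl | h
  · simp
  · have h' : (m : ℝ) - k ≠ 0 := by
      rw [sub_ne_zero]; exact_mod_cast h.symm
    rw [if_neg h]
    have := pf_two hk' h' hm' (by ring)
    linear_combination (e ^ k * (k : ℝ)⁻¹ ^ p) * this

theorem Psi_rec_one_left {e : ℝ} (he : e = 1 ∨ e = -1) {j : ℕ} (hj : 1 ≤ j) {m : ℕ}
    (hm : 1 ≤ m) :
    Psi e 1 (j + 1) m =
      (m : ℝ)⁻¹ * (Psi e 1 j m + (e ^ m * Cc e (j + 1) - ((m : ℝ)⁻¹) ^ (j + 1))) := by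
  have hC : HasSum (fun k : ℤ => e ^ k * (((m : ℝ) - k)⁻¹) ^ (j + 1)) (e ^ m * Cc e (j + 1)) := by
    have h1 := ((Cc_summable he (p := j + 1) (by omega)).hasSum).mul_left (e ^ m)
    have h2 := (Equiv.subLeft (m : ℤ)).hasSum_iff.2 h1
    refine hs_congr h2 fun k => ?_
    simp only [Function.comp, Equiv.subLeft_apply, sgn_sub he]
    rw [zpow_natCast, ← mul_assoc, ← mul_assoc, sgn_sq_nat he]
    simp
  refine (Psi_hasSum he (by omega) (by omega) m).unique ?_
  refine hs_congr (((Psi_hasSum he (p := 1) (by omega) hj m).add (hC.sub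
    (hasSum_ite_eq (0 : ℤ) (((m : ℝ)⁻¹) ^ (j + 1))))).mul_left ((m : ℝ)⁻¹)) fun k => ?_
  have hm' : (m : ℝ) ≠ 0 := by positivity
  rcases eq_or_ne k 0 with rfl | hk
  · simp
  have hk' : (k : ℝ) ≠ 0 := by exact_mod_cast hk
  rw [if_neg hk]
  rcases eq_or_ne ((m : ℝ) - k) 0 with h | h
  · simp [h, show j ≠ 0 by omega]
  · have := pf_two hk' h hm' (by ring)
    linear_combination (e ^ k * ((m : ℝ) - k)⁻¹ ^ j) * this

theorem tendsto_inv_pow {e : ℝ} (he : e = 1 ∨ e = -1) {j : ℕ} (hj : 1 ≤ j) :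
    Tendsto (fun M : ℕ => e ^ (M : ℤ) * (((M : ℤ) : ℝ)⁻¹) ^ j) atTop (𝓝 0) := by
  have h0 : Tendsto (fun M : ℕ => ((M : ℝ))⁻¹) atTop (𝓝 0) := tendsto_inv_atTop_nhds_zero_nat
  refine squeeze_zero_norm (fun M => ?_) h0
  rw [Real.norm_eq_abs, abs_mul, sgn_abs he, one_mul]
  have := abs_pow_le_pow (abs_inv_int_le M) hj
  simpa using this

theorem Psi_one_one {e : ℝ} (he : e = 1 ∨ e = -1) {m : ℕ} (hm : 1 ≤ m) :
    Psi e 1 1 m = -(1 + e ^ m) * ((m : ℝ)⁻¹) ^ 2 := by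
  have hm' : (m : ℝ) ≠ 0 := by positivity
  have h1 := (Psi_hasSum he (p := 1) (j := 1) le_rfl le_rfl m).nat_add_neg.tendsto_sum_nat
  set φ : ℤ → ℝ := fun k => e ^ k * ((k : ℝ)⁻¹) ^ 1 with hφ
  have hlim : Tendsto (fun M : ℕ => φ M) atTop (𝓝 0) := tendsto_inv_pow he le_rfl
  have h2 := (shift_add_tendsto hlim m).sub (shift_sub_tendsto hlim m)
  have h3 : -∑ i ∈ Finset.range m, φ i - ∑ i ∈ Finset.range m, φ (-1 - i) = φ m := by
    have : φ m = φ ((m : ℕ) : ℤ) - φ ((0 : ℕ) : ℤ) := by simp [hφ]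
    rw [this, ← Finset.sum_range_sub (fun i : ℕ => φ (i : ℤ)), ← Finset.sum_neg_distrib,
      ← Finset.sum_sub_distrib]
    refine Finset.sum_congr rfl fun i _ => ?_
    have h4 : (-1 - (i : ℤ)) = -((i + 1 : ℕ) : ℤ) := by push_cast; ring
    rw [h4]
    simp only [hφ, sgn_neg he]
    push_cast
    rw [inv_neg]
    ring
  rw [h3] at h2
  have h5 := ((hasSum_ite_eq m (e ^ m * ((m : ℝ)⁻¹) ^ 2)).add
    (hasSum_ite_eq 0 (2 * ((m : ℝ)⁻¹) ^ 2))).tendsto_sum_nat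
  have h6 := (h2.const_mul (e ^ m * (m : ℝ)⁻¹)).sub h5
  have h7 := tendsto_nhds_unique (h1.congr fun M => ?_) h6
  · simp only [Int.cast_zero, inv_zero, pow_one, zero_mul, mul_zero, add_zero] at h7
    rw [h7]
    simp only [hφ, zpow_natCast, Int.cast_natCast, pow_one]
    linear_combination ((m : ℝ)⁻¹) ^ 2 * sgn_sq_nat he m
  · rw [← Finset.sum_sub_distrib, Finset.mul_sum, ← Finset.sum_sub_distrib]
    refine Finset.sum_congr rfl fun k _ => ?_
    simp only [hφ, sgn_neg he, sgn_sub he, sgn_add he, pow_one, zpow_natCast]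
    push_cast
    have hs := sgn_sq_nat he m
    rcases Nat.eq_zero_or_pos k with rfl | hk
    · rw [if_neg (by omega), if_pos rfl]
      simp
      linear_combination (-2 * ((m : ℝ) ^ 2)⁻¹) * hs
    · have hk' : (k : ℝ) ≠ 0 := by positivity
      rw [if_neg (by omega : ¬ k = 0)]
      rcases eq_or_ne k m with rfl | h
      · rw [if_pos rfl]
        rw [show (k : ℝ) + k = 2 * k by ring]
        simp
        have hs' : e ^ k * ((k : ℝ)⁻¹ * (e ^ k * (e ^ k * ((k : ℝ)⁻¹ * 2⁻¹)))) =
            e ^ k * (k : ℝ)⁻¹ * (k : ℝ)⁻¹ * 2⁻¹ := by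
          linear_combination (e ^ k * (k : ℝ)⁻¹ * (k : ℝ)⁻¹ * 2⁻¹) * hs
        ring_nf at hs' ⊢
        linear_combination -hs'
      · have h8 : (m : ℝ) - k ≠ 0 := by
          rw [sub_ne_zero]; exact_mod_cast h.symm
        have h9 : (m : ℝ) + k ≠ 0 := by positivity
        have h10 : (k : ℝ) - m ≠ 0 := by
          rw [sub_ne_zero]; exact_mod_cast h
        rw [if_neg h, sub_neg_eq_add, inv_neg, ← neg_sub (m : ℝ) k, inv_neg, add_comm (k : ℝ) m]
        field_simp
        linear_combination (-2 * m * k * e ^ k) * hs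

theorem Psi_good {e : ℝ} (he : e = 1 ∨ e = -1) (N : ℕ) : ∀ p j : ℕ, 1 ≤ p → 1 ≤ j → p + j = N →
    Good (Psi e p j) := by
  induction N with
  | zero => intro p j hp hj h; omega
  | succ N ih =>
    intro p j hp hj h
    obtain ⟨p, rfl⟩ := Nat.exists_eq_add_of_le' hp
    obtain ⟨j, rfl⟩ := Nat.exists_eq_add_of_le' hj
    rcases Nat.eq_zero_or_pos p with rfl | hp'
    · rcases Nat.eq_zero_or_pos j with rfl | hj'
      · have h1 := (Good_pow (i := 2) (by omega)).add (Good_sign (i := 2) (by omega) he)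
        refine (h1.mul_left (rat_mem (-1))).congr fun m hm => ?_
        rw [zero_add, Psi_one_one he hm]
        push_cast; ring
      · have h1 := ih 1 j le_rfl hj' (by omega)
        have h2 := (Good_sign (i := 1) (by omega) he).mul_left (Cc_mem he (p := j + 1) (by omega))
        have h3 := Good_pow (i := j + 2) (by omega)
        refine ((h1.inv_mul.add h2).sub h3).congr fun m hm => ?_
        rw [zero_add, Psi_rec_one_left he hj' hm]
        ring
    · rcases Nat.eq_zero_or_pos j with rfl | hj'
      · have h1 := ih p 1 hp' le_rfl (by omega)
        have h2 := (Good_pow (i := 1) (by omega)).mul_left (Cc_mem he (p := p + 1) (by omega))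
        have h3 := Good_sign (i := p + 2) (by omega) he
        refine ((h1.inv_mul.add h2).sub h3).congr fun m hm => ?_
        rw [zero_add, Psi_rec_one_right he hp' hm]
        ring
      · have h1 := ih (p + 1) j (by omega) hj' (by omega)
        have h2 := ih p (j + 1) hp' (by omega) (by omega)
        exact (h1.add h2).inv_mul.congr fun m hm => Psi_rec he hp' hj' hm

/-- Harmonic-type sums `∑_{0<i<n} i^{-j}`. -/
noncomputable def Hs (j n : ℕ) : ℝ := ∑ i ∈ Finset.range n, ((i : ℝ)⁻¹) ^ j

/-- The kernel `∑ m^{-(i+1)} (m-k)^{-(j-i)}`. -/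
noncomputable def Wk (j m : ℕ) (k : ℤ) : ℝ :=
  ∑ i ∈ Finset.range j, ((m : ℝ)⁻¹) ^ (i + 1) * (((m : ℝ) - k)⁻¹) ^ (j - i)

theorem Wk_eq {j : ℕ} (hj : 1 ≤ j) (m : ℕ) (k : ℤ) (hk : k ≠ 0) :
    (k : ℝ) * Wk j m k = ((((m : ℤ) - k : ℤ) : ℝ)⁻¹) ^ j - ((((m : ℤ)) : ℝ)⁻¹) ^ j
      + ((if (m : ℤ) = k then ((k : ℝ)⁻¹) ^ j else 0) - (if m = 0 then ((-k : ℝ)⁻¹) ^ j else 0)) := by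
  have hk' : (k : ℝ) ≠ 0 := by exact_mod_cast hk
  have hj' : j ≠ 0 := by omega
  rcases Nat.eq_zero_or_pos m with rfl | hm
  · have : Wk j 0 k = 0 := Finset.sum_eq_zero fun i _ => by simp
    rw [this, if_neg (by simpa using hk.symm)]
    simp [hj']
  rw [if_neg (show ¬ m = 0 by omega)]
  have hm' : (m : ℝ) ≠ 0 := by positivity
  rcases eq_or_ne (m : ℤ) k with rfl | h
  · have : Wk j m m = 0 := Finset.sum_eq_zero fun i hi => by
      have : j - i ≠ 0 := by have := Finset.mem_range.1 hi; omega
      simp [this]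
    rw [this, if_pos rfl]
    simp [hj']
  rw [if_neg h]
  have h' : (m : ℝ) - k ≠ 0 := by
    rw [sub_ne_zero]; exact_mod_cast h
  have h1 : Wk j m k = ((m : ℝ)⁻¹ * ((m : ℝ) - k)⁻¹) *
      ∑ i ∈ Finset.range j, ((m : ℝ)⁻¹) ^ i * (((m : ℝ) - k)⁻¹) ^ (j - 1 - i) := by
    rw [Wk, Finset.mul_sum]
    refine Finset.sum_congr rfl fun i hi => ?_
    have : j - i = (j - 1 - i) + 1 := by have := Finset.mem_range.1 hi; omega
    rw [this]
    ring
  have h2 := geom_sum₂_mul ((m : ℝ)⁻¹) (((m : ℝ) - k)⁻¹) j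
  have h3 : (k : ℝ) * ((m : ℝ)⁻¹ * ((m : ℝ) - k)⁻¹) = ((m : ℝ) - k)⁻¹ - (m : ℝ)⁻¹ := by
    field_simp
    ring
  rw [h1, ← mul_assoc, h3]
  push_cast
  linear_combination (-1) * h2

theorem Wk_summable {j : ℕ} (k : ℤ) : Summable (fun m : ℕ => (k : ℝ) * Wk j m k) := by
  refine Summable.mul_left _ ?_
  unfold Wk
  refine summable_sum fun i hi => ?_
  have hi' := Finset.mem_range.1 hi
  have h1 := (summable_two k (a := i + 1) (b := j - i) (by omega) (by omega)
    (w := fun _ => 1) (by simp)).comp_injective (Nat.cast_injective (R := ℤ))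
  refine (h1.mul_left ((-1) ^ (j - i))).congr fun m => ?_
  simp only [Function.comp]
  rw [← neg_sub ((k : ℝ)), inv_neg, neg_pow]
  push_cast
  ring

theorem tendsto_f {j : ℕ} (hj : 1 ≤ j) :
    Tendsto (fun M : ℕ => (fun k : ℤ => ((k : ℝ)⁻¹) ^ j) (M : ℤ)) atTop (𝓝 0) := by
  simpa using tendsto_inv_pow (e := 1) (Or.inl rfl) hj

theorem Wk_pos {j : ℕ} (hj : 1 ≤ j) {n : ℕ} (hn : 1 ≤ n) :
    HasSum (fun m : ℕ => ((n : ℤ) : ℝ) * Wk j m n) ((-1) ^ j * Hs j n + ((n : ℝ)⁻¹) ^ j) := by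
  have hs := Wk_summable (j := j) n
  have h1 := shift_sub_tendsto (f := fun k : ℤ => ((k : ℝ)⁻¹) ^ j) (tendsto_f hj) n
  have h2 := ((hasSum_ite_eq n ((n : ℝ)⁻¹ ^ j)).sub
    (hasSum_ite_eq 0 ((-n : ℝ)⁻¹ ^ j))).tendsto_sum_nat
  have h3 := h1.add h2
  have h4 : ∑ i ∈ Finset.range n, (((-1 - (i : ℤ) : ℤ) : ℝ)⁻¹) ^ j =
      (-1) ^ j * (Hs j n + (n : ℝ)⁻¹ ^ j) := by
    have : Hs j n + (n : ℝ)⁻¹ ^ j = ∑ i ∈ Finset.range n, (((i + 1 : ℕ) : ℝ)⁻¹) ^ j := by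
      have h5 := Finset.sum_range_succ (fun i : ℕ => ((i : ℝ)⁻¹) ^ j) n
      rw [Finset.sum_range_succ'] at h5
      rw [Hs, ← h5]
      simp [show j ≠ 0 by omega]
    rw [this, Finset.mul_sum]
    refine Finset.sum_congr rfl fun i _ => ?_
    rw [← mul_pow]
    congr 1
    push_cast
    rw [show (-1 - (i : ℝ)) = -(i + 1) by ring, inv_neg]
    ring
  have h5 := tendsto_nhds_unique (hs.hasSum.tendsto_sum_nat) (h3.congr fun M => ?_)
  · have := hs.hasSum
    rw [h5, h4] at this
    convert this using 1
    rw [inv_neg, neg_pow ((n : ℝ)⁻¹)]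
    ring
  · rw [← Finset.sum_add_distrib]
    refine Finset.sum_congr rfl fun m _ => ?_
    rw [Wk_eq hj m n (by omega)]
    simp only [Nat.cast_inj, Int.cast_natCast]

theorem Wk_neg {j : ℕ} (hj : 1 ≤ j) {n : ℕ} (hn : 1 ≤ n) :
    HasSum (fun m : ℕ => ((-n : ℤ) : ℝ) * Wk j m (-n)) (-Hs j n - ((n : ℝ)⁻¹) ^ j) := by
  have hs := Wk_summable (j := j) (-n)
  have h1 := shift_add_tendsto (f := fun k : ℤ => ((k : ℝ)⁻¹) ^ j) (tendsto_f hj) n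
  have h2 := (hasSum_ite_eq 0 ((n : ℝ)⁻¹ ^ j)).tendsto_sum_nat
  have h3 := h1.sub h2
  have h5 := tendsto_nhds_unique (hs.hasSum.tendsto_sum_nat) (h3.congr fun M => ?_)
  · have := hs.hasSum
    rw [h5] at this
    simpa [Hs] using this
  · rw [← Finset.sum_sub_distrib]
    refine Finset.sum_congr rfl fun m _ => ?_
    rw [Wk_eq hj m (-n) (by omega), if_neg (show ¬ (m : ℤ) = -n by omega)]
    simp [sub_eq_add_neg]

theorem ZS_S {e : ℝ} (he : e = 1 ∨ e = -1) {p j : ℕ} (hp : 2 ≤ p) (hj : 1 ≤ j)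
    (hodd : Odd (p + j)) (hw : 5 ≤ p + j) :
    ZS (fun n : ℕ => e ^ n * ((n : ℝ)⁻¹) ^ p * Hs j n) := by
  obtain ⟨P, rfl⟩ : ∃ P, p = P + 1 := ⟨p - 1, by omega⟩
  have hP : 1 ≤ P := by omega
  set t : ℕ × ℤ → ℝ := fun q => ∑ i ∈ Finset.range j, e ^ q.2 * (((q.1 : ℝ)⁻¹) ^ (i + 1) *
    ((q.2 : ℝ)⁻¹) ^ P * (((q.1 : ℝ) - q.2)⁻¹) ^ (j - i)) with ht
  have hsum : Summable t := by
    refine summable_sum fun i hi => ?_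
    have hi' := Finset.mem_range.1 hi
    exact summable_three (by omega) hP (by omega) (by omega) (w := fun k => e ^ k) (sgn_abs he)
  have hrow : ZS (fun m : ℕ => ∑ i ∈ Finset.range j, ((m : ℝ)⁻¹) ^ (i + 1) * Psi e P (j - i) m) := by
    refine ZS.sum _ fun i hi => ?_
    have hi' := Finset.mem_range.1 hi
    exact Psi_good he _ P (j - i) hP (by omega) rfl (i + 1) (by omega)
  have hZ : ZS t := by
    refine ZS.of_fiber hsum (fun m => ?_) hrow
    refine hasSum_sum fun i hi => ?_
    have hi' := Finset.mem_range.1 hi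
    refine hs_congr ((Psi_hasSum he hP (j := j - i) (by omega) m).mul_left (((m : ℝ)⁻¹) ^ (i + 1)))
      fun k => ?_
    ring
  have hcol : ZS (fun k : ℤ => ∑' m : ℕ, t (m, k)) :=
    hZ.swap.fiber fun k => (hZ.swap.summable.prod_factor k).hasSum
  have htW : ∀ m : ℕ, ∀ k : ℤ, k ≠ 0 →
      t (m, k) = e ^ k * ((k : ℝ)⁻¹) ^ (P + 1) * ((k : ℝ) * Wk j m k) := by
    intro m k hk
    have hk' : (k : ℝ) ≠ 0 := by exact_mod_cast hk
    have h1 : e ^ k * ((k : ℝ)⁻¹) ^ (P + 1) * ((k : ℝ) * Wk j m k) =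
        (e ^ k * ((k : ℝ)⁻¹) ^ P) * Wk j m k := by
      have : (k : ℝ)⁻¹ * k = 1 := inv_mul_cancel₀ hk'
      linear_combination (e ^ k * ((k : ℝ)⁻¹) ^ P * Wk j m k) * this
    rw [h1, Wk, Finset.mul_sum]
    refine Finset.sum_congr rfl fun i _ => ?_
    simp only
    ring
  have hcol0 : ∑' m : ℕ, t (m, 0) = 0 := by
    simp [ht, show P ≠ 0 by omega]
  have hpos : ∀ n : ℕ, 1 ≤ n → ∑' m : ℕ, t (m, (n : ℤ)) =
      e ^ n * ((n : ℝ)⁻¹) ^ (P + 1) * ((-1) ^ j * Hs j n + ((n : ℝ)⁻¹) ^ j) := by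
    intro n hn
    have := (Wk_pos hj hn).mul_left (e ^ n * ((n : ℝ)⁻¹) ^ (P + 1))
    rw [← this.tsum_eq]
    congr 1; funext m
    rw [htW m n (by omega)]
    simp
  have hneg : ∀ n : ℕ, 1 ≤ n → ∑' m : ℕ, t (m, -(n : ℤ)) =
      e ^ n * (-(n : ℝ)⁻¹) ^ (P + 1) * (-Hs j n - ((n : ℝ)⁻¹) ^ j) := by
    intro n hn
    have := (Wk_neg hj hn).mul_left (e ^ n * (-(n : ℝ)⁻¹) ^ (P + 1))
    rw [← this.tsum_eq]
    congr 1; funext m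
    rw [htW m (-n) (by omega), sgn_neg he]
    simp [inv_neg]
  have hN : ZS (fun n : ℕ => e ^ n * ((n : ℝ)⁻¹) ^ (P + 1) *
      (2 * (-1) ^ j * Hs j n + (1 + (-1) ^ j) * ((n : ℝ)⁻¹) ^ j)) := by
    obtain ⟨x, hx, hx'⟩ := hcol
    refine ⟨x, hx, ?_⟩
    have h1 := hx'.nat_add_neg
    rw [hcol0, add_zero] at h1
    refine hs_congr h1 fun n => ?_
    rcases Nat.eq_zero_or_pos n with rfl | hn
    · simp only [Nat.cast_zero, neg_zero, hcol0]
      simp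
    · rw [hpos n hn, hneg n hn, neg_pow ((n : ℝ)⁻¹)]
      have : (-1 : ℝ) ^ (P + 1) = -(-1) ^ j := by
        have h3 : (-1 : ℝ) ^ (P + 1) * (-1) ^ j = -1 := by rw [← pow_add, hodd.neg_one_pow]
        rcases neg_one_pow_eq_or ℝ j with h | h <;> rw [h] at h3 ⊢ <;> linarith
      rw [this]
      ring
  have hz := (ZS_zeta_sign (s := P + 1 + j) (by omega) he).rat (1 + (-1) ^ j)
  refine ((hN.sub hz).rat ((-1) ^ j / 2)).congr fun n => ?_
  push_cast
  rcases neg_one_pow_eq_or ℝ j with h | h <;> rw [h] <;> ring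

theorem ZS_pnat {g : ℕ → ℕ → ℝ}
    (hb : ∀ k l : ℕ, 1 ≤ k → 1 ≤ l → |g k l| ≤ ((k : ℝ)⁻¹) ^ 2 * ((l : ℝ)⁻¹) ^ 2)
    (h : ZS (fun n : ℕ => ∑ k ∈ Finset.range n, if k = 0 then 0 else g k (n - k))) :
    ZS (fun p : ℕ+ × ℕ+ => g p.1 p.2) := by
  set f : ℕ × ℕ → ℝ := fun p => if p.1 = 0 ∨ p.2 = 0 then 0 else g p.1 p.2 with hf
  have h0 : Summable (fun k : ℕ => ((k : ℝ)⁻¹) ^ 2) := (ZS_zeta le_rfl).summable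
  have h1 : Summable (fun p : ℕ × ℕ => ((p.1 : ℝ)⁻¹) ^ 2 * ((p.2 : ℝ)⁻¹) ^ 2) :=
    h0.mul_of_nonneg h0 (fun _ => by positivity) (fun _ => by positivity)
  have hs : Summable f := by
    refine Summable.of_norm_bounded h1 fun p => ?_
    simp only [hf]
    split_ifs with hp
    · simp only [norm_zero]; positivity
    · push Not at hp
      exact hb _ _ (by omega) (by omega)
  have hZ : ZS f := by
    refine ZS.of_antidiagonal hs (h.congr fun n => ?_)
    rw [Finset.Nat.sum_antidiagonal_eq_sum_range_succ_mk, Finset.sum_range_succ]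
    have : f (n, n - n) = 0 := by simp [hf]
    rw [this, add_zero]
    refine Finset.sum_congr rfl fun k hk => ?_
    have := Finset.mem_range.1 hk
    simp only [hf]
    simp [show ¬ n - k = 0 by omega]
  refine (hZ.inj (g := fun p : ℕ+ × ℕ+ => ((p.1 : ℕ), (p.2 : ℕ))) ?_ ?_).congr ?_
  · rintro ⟨a, b⟩ ⟨c, d⟩ h
    simpa using h
  · rintro ⟨a, b⟩ hx
    simp only [hf]
    rw [if_pos]
    by_contra hc
    push Not at hc
    exact hx ⟨(⟨a, by omega⟩, ⟨b, by omega⟩), rfl⟩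
  · rintro ⟨a, b⟩
    simp [hf]

theorem AB_bound {q x : ℕ} (hq : 2 ≤ q) (hx : 1 ≤ x) (hw : 4 ≤ q + x) {k l y : ℝ} (hk : 1 ≤ k)
    (hl : 1 ≤ l) (hy : k ≤ y) :
    |((k + l)⁻¹) ^ q * (y⁻¹) ^ x| ≤ (k⁻¹) ^ 2 * (l⁻¹) ^ 2 := by
  have k0 : 0 < k := by linarith
  have l0 : 0 < l := by linarith
  have y0 : 0 < y := by linarith
  rw [abs_of_nonneg (by positivity)]
  have a1 : k⁻¹ ≤ 1 := inv_le_one_of_one_le₀ hk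
  have b1 : l⁻¹ ≤ 1 := inv_le_one_of_one_le₀ hl
  have sa : (k + l)⁻¹ ≤ k⁻¹ := inv_anti₀ k0 (by linarith)
  have sb : (k + l)⁻¹ ≤ l⁻¹ := inv_anti₀ l0 (by linarith)
  have ya : y⁻¹ ≤ k⁻¹ := inv_anti₀ k0 hy
  have s0 : 0 ≤ (k + l)⁻¹ := by positivity
  have a0 : 0 ≤ k⁻¹ := by positivity
  have b0 : 0 ≤ l⁻¹ := by positivity
  have yy : 0 ≤ y⁻¹ := by positivity
  rcases (by omega : 2 ≤ x ∨ 3 ≤ q) with h | h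
  · have h1 : ((k + l)⁻¹) ^ q ≤ (l⁻¹) ^ 2 :=
      (pow_le_pow_left₀ s0 sb q).trans (pow_le_pow_of_le_one b0 b1 hq)
    have h2 : (y⁻¹) ^ x ≤ (k⁻¹) ^ 2 :=
      (pow_le_pow_left₀ yy ya x).trans (pow_le_pow_of_le_one a0 a1 h)
    rw [mul_comm ((k⁻¹) ^ 2)]
    gcongr
  · have h1 : ((k + l)⁻¹) ^ q ≤ (l⁻¹) ^ 2 * k⁻¹ := by
      calc ((k + l)⁻¹) ^ q ≤ ((k + l)⁻¹) ^ 3 := pow_le_pow_of_le_one s0 (sa.trans a1) h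
        _ = ((k + l)⁻¹) ^ 2 * (k + l)⁻¹ := by ring
        _ ≤ _ := by gcongr
    have h2 : (y⁻¹) ^ x ≤ k⁻¹ := by
      calc (y⁻¹) ^ x ≤ (k⁻¹) ^ x := pow_le_pow_left₀ yy ya x
        _ ≤ (k⁻¹) ^ 1 := pow_le_pow_of_le_one a0 a1 hx
        _ = _ := by ring
    calc ((k + l)⁻¹) ^ q * (y⁻¹) ^ x ≤ ((l⁻¹) ^ 2 * k⁻¹) * k⁻¹ := by gcongr
      _ = _ := by ring

theorem ZS_A {q x : ℕ} (hq : 2 ≤ q) (hx : 1 ≤ x) (hodd : Odd (q + x)) (hw : 5 ≤ q + x) :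
    ZS (fun p : ℕ+ × ℕ+ => ((((p.1 : ℕ) : ℝ) + ((p.2 : ℕ) : ℝ))⁻¹) ^ q * (((p.1 : ℕ) : ℝ)⁻¹) ^ x) := by
  refine ZS_pnat (g := fun k l => (((k : ℝ) + (l : ℝ))⁻¹) ^ q * ((k : ℝ)⁻¹) ^ x)
    (fun k l hk hl => AB_bound hq hx (by omega) (by exact_mod_cast hk) (by exact_mod_cast hl) le_rfl) ?_
  refine (ZS_S (e := 1) (Or.inl rfl) hq hx hodd hw).congr fun n => ?_
  rw [Hs, one_pow, one_mul, Finset.mul_sum]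
  refine Finset.sum_congr rfl fun k hk => ?_
  have := Finset.mem_range.1 hk
  rw [Nat.cast_sub this.le]
  split_ifs with h
  · simp [h, show x ≠ 0 by omega]
  · simp

theorem ZS_double {q x : ℕ} (hq : 2 ≤ q) (hx : 1 ≤ x) (hodd : Odd (q + x)) (hw : 5 ≤ q + x) :
    ZS (fun n : ℕ => ((n : ℝ)⁻¹) ^ q * Hs x (n + n)) := by
  have h1 := ((ZS_S (e := 1) (Or.inl rfl) hq hx hodd hw).add
    (ZS_S (e := -1) (Or.inr rfl) hq hx hodd hw)).inj (g := fun n : ℕ => n + n)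
    (fun a b h => by simp at h; omega) (fun n hn => by
      have : Odd n := by
        rw [← Nat.not_even_iff_odd]
        rintro ⟨k, rfl⟩
        exact hn ⟨k, rfl⟩
      rw [this.neg_one_pow]; ring)
  refine (h1.rat (2 ^ q / 2)).congr fun n => ?_
  have h2 : Even (n + n) := ⟨n, rfl⟩
  rw [h2.neg_one_pow, one_pow]
  push_cast
  rw [show (n : ℝ) + n = 2 * n by ring, mul_inv, mul_pow]
  have : (2 : ℝ) ^ q * (2⁻¹) ^ q = 1 := by rw [← mul_pow]; norm_num
  linear_combination (-((n : ℝ)⁻¹) ^ q * Hs x (n + n)) * this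

theorem ZS_B {q x : ℕ} (hq : 2 ≤ q) (hx : 1 ≤ x) (hodd : Odd (q + x)) (hw : 5 ≤ q + x) :
    ZS (fun p : ℕ+ × ℕ+ => ((((p.1 : ℕ) : ℝ) + ((p.2 : ℕ) : ℝ))⁻¹) ^ q *
      ((2 * ((p.1 : ℕ) : ℝ) + ((p.2 : ℕ) : ℝ))⁻¹) ^ x) := by
  refine ZS_pnat (g := fun k l => (((k : ℝ) + (l : ℝ))⁻¹) ^ q * ((2 * (k : ℝ) + (l : ℝ))⁻¹) ^ x)
    (fun k l hk hl => AB_bound hq hx (by omega) (by exact_mod_cast hk) (by exact_mod_cast hl) (by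
      have : (0 : ℝ) ≤ k := by positivity
      have : (0 : ℝ) ≤ l := by positivity
      linarith)) ?_
  refine (((ZS_double hq hx hodd hw).sub (ZS_S (e := 1) (Or.inl rfl) hq hx hodd hw)).sub
    (ZS_zeta (s := q + x) (by omega))).congr fun n => ?_
  rcases Nat.eq_zero_or_pos n with rfl | hn
  · simp [show q ≠ 0 by omega]
  have h1 : Hs x (n + n) = Hs x n + ∑ k ∈ Finset.range n, (((n + k : ℕ) : ℝ)⁻¹) ^ x := by
    rw [Hs, Finset.sum_range_add]; rfl
  have h2 : ∑ k ∈ Finset.range n, (if k = 0 then (0 : ℝ) else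
      (((k : ℝ) + ((n - k : ℕ) : ℝ))⁻¹) ^ q * ((2 * (k : ℝ) + ((n - k : ℕ) : ℝ))⁻¹) ^ x) =
      ∑ k ∈ Finset.range n, (((n : ℝ)⁻¹) ^ q * (((n + k : ℕ) : ℝ)⁻¹) ^ x -
        if k = 0 then ((n : ℝ)⁻¹) ^ (q + x) else 0) := by
    refine Finset.sum_congr rfl fun k hk => ?_
    have := Finset.mem_range.1 hk
    rw [Nat.cast_sub this.le]
    split_ifs with h
    · subst h; simp [pow_add]
    · push_cast
      rw [sub_zero]
      congr 3 <;> ring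
  rw [h2, Finset.sum_sub_distrib, ← Finset.mul_sum, h1]
  simp [hn]
  ring


theorem ZS_C_aux (N : ℕ) : ∀ x y r : ℕ, x + y = N + 1 → 2 ≤ r + x → 2 ≤ r + y → Odd (x + y + r) →
    5 ≤ x + y + r →
    ZS (fun p : ℕ+ × ℕ+ => (((p.1 : ℕ) : ℝ)⁻¹) ^ x *
      ((((p.1 : ℕ) : ℝ) + 2 * ((p.2 : ℕ) : ℝ))⁻¹) ^ y *
      ((((p.1 : ℕ) : ℝ) + ((p.2 : ℕ) : ℝ))⁻¹) ^ r) := by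
  induction N with
  | zero =>
    intro x y r h1 h2 h3 h4 h5
    rcases (by omega : (x = 0 ∧ y = 1) ∨ (x = 1 ∧ y = 0)) with ⟨rfl, rfl⟩ | ⟨rfl, rfl⟩
    · refine (ZS_B (q := r) (x := 1) (by omega) le_rfl (by rwa [show r + 1 = 0 + 1 + r by omega])
        (by omega)).swap.congr fun p => ?_
      rw [add_comm ((p.2 : ℕ) : ℝ), add_comm (2 * ((p.2 : ℕ) : ℝ))]; ring
    · refine (ZS_A (q := r) (x := 1) (by omega) le_rfl (by rwa [show r + 1 = 1 + 0 + r by omega])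
        (by omega)).congr fun p => ?_
      ring
  | succ N ih =>
    intro x y r h1 h2 h3 h4 h5
    rcases x with _ | x
    · refine (ZS_B (q := r) (x := y) (by omega) (by omega) (by rwa [show r + y = 0 + y + r by omega])
        (by omega)).swap.congr fun p => ?_
      rw [add_comm ((p.2 : ℕ) : ℝ), add_comm (2 * ((p.2 : ℕ) : ℝ))]; ring
    rcases y with _ | y
    · refine (ZS_A (q := r) (x := x + 1) (by omega) (by omega)
        (by rwa [show r + (x + 1) = x + 1 + 0 + r by omega]) (by omega)).congr fun p => ?_
      ring
    have e1 := ih (x + 1) y (r + 1) (by omega) (by omega) (by omega)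
      (by rwa [show x + 1 + y + (r + 1) = x + 1 + (y + 1) + r by omega]) (by omega)
    have e2 := ih x (y + 1) (r + 1) (by omega) (by omega) (by omega)
      (by rwa [show x + (y + 1) + (r + 1) = x + 1 + (y + 1) + r by omega]) (by omega)
    refine ((e1.add e2).rat (1 / 2)).congr fun p => ?_
    obtain ⟨⟨m, hm⟩, ⟨n, hn⟩⟩ := p
    have hm' : (0 : ℝ) < m := by exact_mod_cast hm
    have hn' : (0 : ℝ) < n := by exact_mod_cast hn
    have key : (m : ℝ)⁻¹ * ((m : ℝ) + 2 * n)⁻¹ =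
        1 / 2 * ((m : ℝ) + n)⁻¹ * ((m : ℝ)⁻¹ + ((m : ℝ) + 2 * n)⁻¹) := by
      field_simp; ring
    simp only [PNat.mk_coe]
    push_cast
    generalize (m : ℝ)⁻¹ = A at *
    generalize ((m : ℝ) + 2 * n)⁻¹ = B at *
    generalize ((m : ℝ) + n)⁻¹ = C at *
    linear_combination (A ^ x * B ^ y * C ^ r) * key

theorem ZS_pnat_zeta {s : ℕ} (hs : 2 ≤ s) : ZS (fun n : ℕ+ => (((n : ℕ) : ℝ)⁻¹) ^ s) := by
  refine (ZS_zeta hs).inj (g := fun n : ℕ+ => (n : ℕ)) PNat.coe_injective fun n hn => ?_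
  rcases Nat.eq_zero_or_pos n with rfl | h
  · simp [show s ≠ 0 by omega]
  · exact absurd ⟨⟨n, h⟩, rfl⟩ hn

theorem ZS.split {g : ℕ+ × ℕ+ → ℝ} (hg : ZS g) (hd : ZS (fun k : ℕ+ => g (k, k))) :
    ZS (fun p : ℕ+ × ℕ+ => g (p.2, p.1 + p.2) + g (p.1 + p.2, p.2)) := by
  obtain ⟨x, hx, hx'⟩ := hg
  obtain ⟨y, hy, hy'⟩ := hd
  have hs := hx'.summable
  have i1 : Function.Injective (fun p : ℕ+ × ℕ+ => (p.2, p.1 + p.2)) := by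
    rintro ⟨a, b⟩ ⟨c, d⟩ h
    simp only [Prod.mk.injEq] at h ⊢
    obtain ⟨rfl, h⟩ := h
    exact ⟨add_right_cancel h, rfl⟩
  have i2 : Function.Injective (fun p : ℕ+ × ℕ+ => (p.1 + p.2, p.2)) := by
    rintro ⟨a, b⟩ ⟨c, d⟩ h
    simp only [Prod.mk.injEq] at h ⊢
    obtain ⟨h, rfl⟩ := h
    exact ⟨add_right_cancel h, rfl⟩
  have i3 : Function.Injective (fun k : ℕ+ => (k, k)) := fun a b h => (Prod.mk.inj h).1
  obtain ⟨u, hu⟩ := hs.comp_injective i1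
  replace hu : HasSum (fun p : ℕ+ × ℕ+ => g (p.2, p.1 + p.2)) u := hu
  obtain ⟨w, hw⟩ := hs.comp_injective i2
  replace hw : HasSum (fun p : ℕ+ × ℕ+ => g (p.1 + p.2, p.2)) w := hw
  have j1 : HasSum (fun p : ℕ+ × ℕ+ => if p.1 < p.2 then g p else 0) u := by
    refine (i1.hasSum_iff ?_).1 ?_
    · rintro ⟨a, b⟩ hp
      rw [if_neg]
      intro h
      exact hp ⟨(b - a, a), by simp only [Prod.mk.injEq, true_and]; exact PNat.sub_add_of_lt h⟩
    · convert hu using 1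
      funext p
      simp [PNat.lt_add_left]
  have j2 : HasSum (fun p : ℕ+ × ℕ+ => if p.2 < p.1 then g p else 0) w := by
    refine (i2.hasSum_iff ?_).1 ?_
    · rintro ⟨a, b⟩ hp
      rw [if_neg]
      intro h
      exact hp ⟨(a - b, b), by simp only [Prod.mk.injEq, and_true]; exact PNat.sub_add_of_lt h⟩
    · convert hw using 1
      funext p
      simp [PNat.lt_add_left]
  have j3 : HasSum (fun p : ℕ+ × ℕ+ => if p.1 = p.2 then g p else 0) y := by
    refine (i3.hasSum_iff ?_).1 ?_
    · rintro ⟨a, b⟩ hp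
      rw [if_neg]
      rintro h
      simp only at h
      subst h
      exact hp ⟨a, rfl⟩
    · convert hy' using 1
      funext p
      simp
  have j4 := (j1.add j2).add j3
  have j5 : x = u + w + y := by
    refine hx'.unique ?_
    convert j4 using 1
    funext p
    rcases lt_trichotomy p.1 p.2 with h | h | h
    · simp [h, h.ne, h.not_gt]
    · simp [h]
    · simp [h, h.ne', h.not_gt]
  refine ⟨u + w, ?_, hu.add hw⟩
  rw [show u + w = x - y by linarith]
  exact sub_mem hx hy

theorem ZS_base1 {q x : ℕ} (hq : 2 ≤ q) (hx : 1 ≤ x) (hodd : Odd (q + x)) (hw : 5 ≤ q + x) :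
    ZS (fun p : ℕ+ × ℕ+ => ((((p.1 : ℕ) : ℝ) + 2 * ((p.2 : ℕ) : ℝ))⁻¹) ^ q *
      ((((p.2 : ℕ) : ℝ)⁻¹) ^ x + ((((p.1 : ℕ) : ℝ) + ((p.2 : ℕ) : ℝ))⁻¹) ^ x)) := by
  refine ((ZS_A hq hx hodd hw).split (((ZS_pnat_zeta (s := q + x) (by omega)).rat
    ((1 / 2) ^ q)).congr fun k => ?_)).congr fun p => ?_
  · simp only
    rw [← two_mul, mul_inv, mul_pow, pow_add]; push_cast; ring
  · simp only [PNat.add_coe]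
    push_cast
    rw [show ((p.2 : ℕ) : ℝ) + ((p.1 : ℕ) + (p.2 : ℕ)) = (p.1 : ℕ) + 2 * (p.2 : ℕ) by ring,
      show ((p.1 : ℕ) : ℝ) + (p.2 : ℕ) + (p.2 : ℕ) = (p.1 : ℕ) + 2 * (p.2 : ℕ) by ring]
    ring

theorem ZS_base2 {q x : ℕ} (hq : 2 ≤ q) (hx : 1 ≤ x) (hodd : Odd (q + x)) (hw : 5 ≤ q + x) :
    ZS (fun p : ℕ+ × ℕ+ => ((((p.1 : ℕ) : ℝ) + 2 * ((p.2 : ℕ) : ℝ))⁻¹) ^ q *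
      (((((p.1 : ℕ) : ℝ) + 3 * ((p.2 : ℕ) : ℝ))⁻¹) ^ x +
        ((2 * ((p.1 : ℕ) : ℝ) + 3 * ((p.2 : ℕ) : ℝ))⁻¹) ^ x)) := by
  refine ((ZS_B hq hx hodd hw).split (((ZS_pnat_zeta (s := q + x) (by omega)).rat
    ((1 / 2) ^ q * (1 / 3) ^ x)).congr fun k => ?_)).congr fun p => ?_
  · simp only
    rw [show 2 * ((k : ℕ) : ℝ) + (k : ℕ) = 3 * (k : ℕ) by ring, ← two_mul, mul_inv, mul_pow, mul_inv,
      mul_pow, pow_add]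
    push_cast; ring
  · simp only [PNat.add_coe]
    push_cast
    rw [show ((p.2 : ℕ) : ℝ) + ((p.1 : ℕ) + (p.2 : ℕ)) = (p.1 : ℕ) + 2 * (p.2 : ℕ) by ring,
      show ((p.1 : ℕ) : ℝ) + (p.2 : ℕ) + (p.2 : ℕ) = (p.1 : ℕ) + 2 * (p.2 : ℕ) by ring,
      show 2 * ((p.2 : ℕ) : ℝ) + ((p.1 : ℕ) + (p.2 : ℕ)) = (p.1 : ℕ) + 3 * (p.2 : ℕ) by ring,
      show 2 * (((p.1 : ℕ) : ℝ) + (p.2 : ℕ)) + (p.2 : ℕ) = 2 * (p.1 : ℕ) + 3 * (p.2 : ℕ) by ring]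
    ring

theorem ZS_sym {α : Type} {u w z : α → ℝ} {κ : ℚ}
    (huw : ∀ p, u p * w p = (κ : ℝ) * (z p * (u p + w p)))
    (hbase : ∀ q x : ℕ, 2 ≤ q → 1 ≤ x → Odd (q + x) → 5 ≤ q + x →
      ZS (fun p => z p ^ q * (u p ^ x + w p ^ x))) (N : ℕ) :
    ∀ x y q : ℕ, x + y = N + 1 → 2 ≤ q → Odd (q + (x + y)) → 5 ≤ q + (x + y) →
      ZS (fun p => z p ^ q * (u p ^ x * w p ^ y + u p ^ y * w p ^ x)) := by
  induction N with
  | zero =>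
    intro x y q h1 h2 h3 h4
    refine (hbase q 1 h2 le_rfl (by rwa [h1] at h3) (by omega)).congr fun p => ?_
    rcases (by omega : (x = 0 ∧ y = 1) ∨ (x = 1 ∧ y = 0)) with ⟨rfl, rfl⟩ | ⟨rfl, rfl⟩ <;> ring
  | succ N ih =>
    intro x y q h1 h2 h3 h4
    rcases x with _ | x
    · refine (hbase q y h2 (by omega) (by rwa [zero_add] at h3) (by omega)).congr fun p => ?_
      ring
    rcases y with _ | y
    · refine (hbase q (x + 1) h2 (by omega) (by rwa [add_zero] at h3) (by omega)).congr fun p => ?_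
      ring
    have e1 := ih (x + 1) y (q + 1) (by omega) (by omega)
      (by rwa [show q + 1 + (x + 1 + y) = q + (x + 1 + (y + 1)) by omega]) (by omega)
    have e2 := ih x (y + 1) (q + 1) (by omega) (by omega)
      (by rwa [show q + 1 + (x + (y + 1)) = q + (x + 1 + (y + 1)) by omega]) (by omega)
    refine ((e1.add e2).rat κ).congr fun p => ?_
    linear_combination (z p ^ q * (u p ^ x * w p ^ y + u p ^ y * w p ^ x)) * huw p

/-- The summand in terms of the inverse quadratic forms. -/
theorem ZS_F_aux {α : Type} {M P Q z : α → ℝ}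
    (h1 : ∀ p, M p * P p = z p ^ 2 * (P p + 4 * M p))
    (h2 : ∀ p, M p * Q p = 1 / 9 * (z p ^ 2 * (Q p + 4 * M p)))
    (h3 : ∀ p, P p * Q p = 1 / 2 * (z p ^ 2 * (P p - Q p)))
    (hM : ∀ a q : ℕ, 1 ≤ a → 3 ≤ q → Odd q → ZS (fun p => M p ^ a * z p ^ q))
    (hP : ∀ a q : ℕ, 1 ≤ a → 3 ≤ q → Odd q → ZS (fun p => P p ^ a * z p ^ q))
    (hQ : ∀ a q : ℕ, 1 ≤ a → 3 ≤ q → Odd q → ZS (fun p => Q p ^ a * z p ^ q)) (N : ℕ) :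
    ∀ a b d q : ℕ, a + b + d = N + 1 → Odd q →
      (3 ≤ q ∨ (1 ≤ a ∧ 1 ≤ b) ∨ (1 ≤ a ∧ 1 ≤ d) ∨ (1 ≤ b ∧ 1 ≤ d)) →
      ZS (fun p => M p ^ a * P p ^ b * Q p ^ d * z p ^ q) := by
  induction N with
  | zero =>
    intro a b d q h hq hc
    have hq3 : 3 ≤ q := by omega
    rcases (by omega : (a = 1 ∧ b = 0 ∧ d = 0) ∨ (a = 0 ∧ b = 1 ∧ d = 0) ∨
      (a = 0 ∧ b = 0 ∧ d = 1)) with ⟨rfl, rfl, rfl⟩ | ⟨rfl, rfl, rfl⟩ | ⟨rfl, rfl, rfl⟩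
    · exact (hM 1 q le_rfl hq3 hq).congr fun p => by ring
    · exact (hP 1 q le_rfl hq3 hq).congr fun p => by ring
    · exact (hQ 1 q le_rfl hq3 hq).congr fun p => by ring
  | succ N ih =>
    intro a b d q h hq hc
    have hq2 : Odd (q + 2) := by
      obtain ⟨k, rfl⟩ := hq
      exact ⟨k + 1, by omega⟩
    have hpos := hq.pos
    by_cases c1 : 1 ≤ a ∧ 1 ≤ b
    · obtain ⟨a, rfl⟩ : ∃ k, a = k + 1 := ⟨a - 1, by omega⟩
      obtain ⟨b, rfl⟩ : ∃ k, b = k + 1 := ⟨b - 1, by omega⟩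
      have e1 := ih a (b + 1) d (q + 2) (by omega) hq2 (by omega)
      have e2 := ih (a + 1) b d (q + 2) (by omega) hq2 (by omega)
      refine (e1.add (e2.rat 4)).congr fun p => ?_
      push_cast
      linear_combination (M p ^ a * P p ^ b * Q p ^ d * z p ^ q) * h1 p
    by_cases c2 : 1 ≤ a ∧ 1 ≤ d
    · obtain ⟨a, rfl⟩ : ∃ k, a = k + 1 := ⟨a - 1, by omega⟩
      obtain ⟨d, rfl⟩ : ∃ k, d = k + 1 := ⟨d - 1, by omega⟩
      have e1 := ih a b (d + 1) (q + 2) (by omega) hq2 (by omega)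
      have e2 := ih (a + 1) b d (q + 2) (by omega) hq2 (by omega)
      refine ((e1.add (e2.rat 4)).rat (1 / 9)).congr fun p => ?_
      push_cast
      linear_combination (M p ^ a * P p ^ b * Q p ^ d * z p ^ q) * h2 p
    by_cases c3 : 1 ≤ b ∧ 1 ≤ d
    · obtain ⟨b, rfl⟩ : ∃ k, b = k + 1 := ⟨b - 1, by omega⟩
      obtain ⟨d, rfl⟩ : ∃ k, d = k + 1 := ⟨d - 1, by omega⟩
      have e1 := ih a (b + 1) d (q + 2) (by omega) hq2 (by omega)
      have e2 := ih a b (d + 1) (q + 2) (by omega) hq2 (by omega)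
      refine ((e1.sub e2).rat (1 / 2)).congr fun p => ?_
      push_cast
      linear_combination (M p ^ a * P p ^ b * Q p ^ d * z p ^ q) * h3 p
    have hq3 : 3 ≤ q := by omega
    rcases (by omega : (1 ≤ a ∧ b = 0 ∧ d = 0) ∨ (a = 0 ∧ 1 ≤ b ∧ d = 0) ∨
      (a = 0 ∧ b = 0 ∧ 1 ≤ d)) with ⟨g, rfl, rfl⟩ | ⟨rfl, g, rfl⟩ | ⟨rfl, rfl, g⟩
    · exact (hM a q g hq3 hq).congr fun p => by ring
    · exact (hP b q g hq3 hq).congr fun p => by ring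
    · exact (hQ d q g hq3 hq).congr fun p => by ring

theorem pnat_cast_pos (n : ℕ+) : (0 : ℝ) < ((n : ℕ) : ℝ) := by exact_mod_cast n.pos

theorem ZS_F {a b d q : ℕ} (ha : 1 ≤ a) (hb : 1 ≤ b) (hq : Odd q) :
    ZS (fun p : ℕ+ × ℕ+ => ((((p.1 : ℕ) : ℝ)⁻¹) ^ 2) ^ a *
      ((((p.2 : ℕ) : ℝ)⁻¹) * ((((p.1 : ℕ) : ℝ) + ((p.2 : ℕ) : ℝ))⁻¹)) ^ b *
      (((((p.1 : ℕ) : ℝ) + 3 * ((p.2 : ℕ) : ℝ))⁻¹) *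
        ((2 * ((p.1 : ℕ) : ℝ) + 3 * ((p.2 : ℕ) : ℝ))⁻¹)) ^ d *
      ((((p.1 : ℕ) : ℝ) + 2 * ((p.2 : ℕ) : ℝ))⁻¹) ^ q) := by
  refine ZS_F_aux (M := fun p : ℕ+ × ℕ+ => (((p.1 : ℕ) : ℝ)⁻¹) ^ 2)
    (P := fun p => (((p.2 : ℕ) : ℝ)⁻¹) * ((((p.1 : ℕ) : ℝ) + ((p.2 : ℕ) : ℝ))⁻¹))
    (Q := fun p => ((((p.1 : ℕ) : ℝ) + 3 * ((p.2 : ℕ) : ℝ))⁻¹) *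
        ((2 * ((p.1 : ℕ) : ℝ) + 3 * ((p.2 : ℕ) : ℝ))⁻¹))
    (z := fun p => (((p.1 : ℕ) : ℝ) + 2 * ((p.2 : ℕ) : ℝ))⁻¹) ?_ ?_ ?_ ?_ ?_ ?_ (a + b + d - 1)
    a b d q (by omega) hq (Or.inr (Or.inl ⟨ha, hb⟩))
  · intro p
    have hm := pnat_cast_pos p.1
    have hn := pnat_cast_pos p.2
    field_simp
    ring
  · intro p
    have hm := pnat_cast_pos p.1
    have hn := pnat_cast_pos p.2
    field_simp
    ring
  · intro p
    have hm := pnat_cast_pos p.1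
    have hn := pnat_cast_pos p.2
    field_simp
    ring
  · intro a q ha hq3 hq
    have ho : Odd (2 * a + q + 0) := by
      obtain ⟨k, rfl⟩ := hq
      exact ⟨a + k, by omega⟩
    refine (ZS_C_aux (2 * a + q - 1) (2 * a) q 0 (by omega) (by omega) (by omega) ho
      (by omega)).congr fun p => ?_
    rw [← pow_mul]; ring
  · intro b q hb hq3 hq
    have ho : Odd (q + (b + b)) := by
      obtain ⟨k, rfl⟩ := hq
      exact ⟨b + k, by omega⟩
    refine ((ZS_sym (κ := 1) (u := fun p : ℕ+ × ℕ+ => ((p.2 : ℕ) : ℝ)⁻¹)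
      (w := fun p => (((p.1 : ℕ) : ℝ) + ((p.2 : ℕ) : ℝ))⁻¹)
      (z := fun p => (((p.1 : ℕ) : ℝ) + 2 * ((p.2 : ℕ) : ℝ))⁻¹) ?_
      (fun q x h1 h2 h3 h4 => ZS_base1 h1 h2 h3 h4) (b + b - 1) b b q (by omega) (by omega) ho
      (by omega)).rat (1 / 2)).congr fun p => ?_
    · intro p
      have hm := pnat_cast_pos p.1
      have hn := pnat_cast_pos p.2
      push_cast
      field_simp
      ring
    · rw [mul_pow]; push_cast; ring
  · intro b q hb hq3 hq
    have ho : Odd (q + (b + b)) := by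
      obtain ⟨k, rfl⟩ := hq
      exact ⟨b + k, by omega⟩
    refine ((ZS_sym (κ := 1 / 3) (u := fun p : ℕ+ × ℕ+ => (((p.1 : ℕ) : ℝ) + 3 * ((p.2 : ℕ) : ℝ))⁻¹)
      (w := fun p => (2 * ((p.1 : ℕ) : ℝ) + 3 * ((p.2 : ℕ) : ℝ))⁻¹)
      (z := fun p => (((p.1 : ℕ) : ℝ) + 2 * ((p.2 : ℕ) : ℝ))⁻¹) ?_
      (fun q x h1 h2 h3 h4 => ZS_base2 h1 h2 h3 h4) (b + b - 1) b b q (by omega) (by omega) ho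
      (by omega)).rat (1 / 2)).congr fun p => ?_
    · intro p
      have hm := pnat_cast_pos p.1
      have hn := pnat_cast_pos p.2
      push_cast
      field_simp
      ring
    · rw [mul_pow]; push_cast; ring

theorem zetaG2_mem_adjoin_zetaValues (a b c d : ℕ) (ha : 0 < a) (hb : 0 < b) (hc : 0 < c)
    (hd : 0 < d) :
    zetaG2 (2 * a) b b (2 * c - 1) d d ∈ Algebra.adjoin ℚ zetaValues := by
  have hq : Odd (2 * c - 1) := ⟨c - 1, by omega⟩
  have h := ZS_F (a := a) (b := b) (d := d) ha hb hq
  obtain ⟨x, hx, hx'⟩ := h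
  have h2 := hx'.summable.tsum_prod
  rw [hx'.tsum_eq] at h2
  have h3 : zetaG2 (2 * a) b b (2 * c - 1) d d = x := by
    rw [h2, zetaG2]
    refine tsum_congr fun m => tsum_congr fun n => ?_
    simp only [one_div, mul_inv, inv_pow, mul_pow, ← pow_mul]
    ring
  rw [h3]
  exact hx
end

section
/- The special value ζ₂(2,1,1,1,1,1; G₂) equals (1/18)·ζ(2)·ζ(5) − (109/1296)·ζ(7). -/
open Filter Topology

/-- The summand as a function of two real variables. -/
noncomputable def gF (x y : ℝ) : ℝ :=
  1 / (x ^ 2 * y * (x + y) * (x + 2 * y) * (x + 3 * y) * (2 * x + 3 * y))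

/-- The elementary kernel (with value `0` on the ray `p n = q m`). -/
noncomputable def gJ (p q x y : ℝ) : ℝ := 1 / ((p * y) ^ 2 - (q * x) ^ 2)

lemma gF_identity (m n : ℕ+) :
    gF m n - gF m (-n) = 1 / 9 * (1 / (m : ℝ) ^ 2 * (1 / (n : ℝ) ^ 5)) +
      1 / (n : ℝ) ^ 5 * (gJ 1 1 m n + gJ 2 1 m n - 1 / 9 * gJ 3 1 m n - 64 / 9 * gJ 3 2 m n) +
      1 / (n : ℝ) ^ 7 * ((if 1 * (m : ℕ) = 1 * n then (1 : ℝ) else 0)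
        - 11 / 16 * (if 1 * (m : ℕ) = 2 * n then (1 : ℝ) else 0)
        + 4 / 81 * (if 1 * (m : ℕ) = 3 * n then (1 : ℝ) else 0)
        + 16 / 81 * (if 2 * (m : ℕ) = 3 * n then (1 : ℝ) else 0)) := by
  have hm := m.pos
  have hn := n.pos
  generalize hM : (m : ℕ) = M at *
  generalize hN : (n : ℕ) = N at *
  unfold gF gJ
  have hN0 : (N : ℝ) ≠ 0 := by positivity
  have hM0 : (M : ℝ) ≠ 0 := by positivity
  by_cases h1 : 1 * M = 1 * N
  · obtain rfl : M = N := by omega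
    rw [if_pos rfl, if_neg (by omega), if_neg (by omega), if_neg (by omega)]
    ring_nf
  by_cases h2 : 1 * M = 2 * N
  · obtain rfl : M = 2 * N := by omega
    rw [if_neg (by omega), if_pos (by omega), if_neg (by omega), if_neg (by omega)]
    push_cast
    ring_nf
  by_cases h3 : 1 * M = 3 * N
  · obtain rfl : M = 3 * N := by omega
    rw [if_neg (by omega), if_neg (by omega), if_pos (by omega), if_neg (by omega)]
    push_cast
    ring_nf
  by_cases h4 : 2 * M = 3 * N
  · obtain ⟨k, rfl⟩ : ∃ k, N = 2 * k := ⟨N / 2, by omega⟩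
    obtain rfl : M = 3 * k := by omega
    have hk : (k : ℝ) ≠ 0 := by
      have : 0 < k := by omega
      positivity
    rw [if_neg (by omega), if_neg (by omega), if_neg (by omega), if_pos (by omega)]
    push_cast
    ring_nf
  · rw [if_neg h1, if_neg h2, if_neg h3, if_neg h4]
    have g1 : (N : ℝ) - M ≠ 0 := fun h => h1 (by
      have : (N : ℝ) = M := by linarith
      have : N = M := by exact_mod_cast this
      omega)
    have g2 : 2 * (N : ℝ) - M ≠ 0 := fun h => h2 (by
      have : 2 * (N : ℝ) = M := by linarith
      have : 2 * N = M := by exact_mod_cast this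
      omega)
    have g3 : 3 * (N : ℝ) - M ≠ 0 := fun h => h3 (by
      have : 3 * (N : ℝ) = M := by linarith
      have : 3 * N = M := by exact_mod_cast this
      omega)
    have g4 : 3 * (N : ℝ) - 2 * M ≠ 0 := fun h => h4 (by
      have : 3 * (N : ℝ) = 2 * M := by linarith
      have : 3 * N = 2 * M := by exact_mod_cast this
      omega)
    have p1 : (N : ℝ) + M ≠ 0 := by positivity
    have p2 : 2 * (N : ℝ) + M ≠ 0 := by positivity
    have p3 : 3 * (N : ℝ) + M ≠ 0 := by positivity
    have p4 : 3 * (N : ℝ) + 2 * M ≠ 0 := by positivity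
    generalize (N : ℝ) = y at *
    generalize (M : ℝ) = x at *
    have e1 : (1 * y) ^ 2 - (1 * x) ^ 2 = (y - x) * (y + x) := by ring
    have e2 : (2 * y) ^ 2 - (1 * x) ^ 2 = (2 * y - x) * (2 * y + x) := by ring
    have e3 : (3 * y) ^ 2 - (1 * x) ^ 2 = (3 * y - x) * (3 * y + x) := by ring
    have e4 : (3 * y) ^ 2 - (2 * x) ^ 2 = (3 * y - 2 * x) * (3 * y + 2 * x) := by ring
    have c0 : x ^ 2 * y ≠ 0 := mul_ne_zero (pow_ne_zero 2 hM0) hN0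
    have hP : (y + x) * (2 * y + x) * (3 * y + x) * (3 * y + 2 * x) ≠ 0 :=
      mul_ne_zero (mul_ne_zero (mul_ne_zero p1 p2) p3) p4
    have hG : (y - x) * (2 * y - x) * (3 * y - x) * (3 * y - 2 * x) ≠ 0 :=
      mul_ne_zero (mul_ne_zero (mul_ne_zero g1 g2) g3) g4
    have comb : ∀ c P G : ℝ, c ≠ 0 → P ≠ 0 → G ≠ 0 →
        1 / (c * P) - 1 / (-(c * G)) = (P + G) / (c * (P * G)) := by
      intro c P G hc hP hG
      field_simp
      ring
    have e5 : x ^ 2 * y * (x + y) * (x + 2 * y) * (x + 3 * y) * (2 * x + 3 * y) =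
      (x ^ 2 * y) * ((y + x) * (2 * y + x) * (3 * y + x) * (3 * y + 2 * x)) := by ring
    have e6 : x ^ 2 * (-y) * (x + -y) * (x + 2 * -y) * (x + 3 * -y) * (2 * x + 3 * -y) =
      -((x ^ 2 * y) * ((y - x) * (2 * y - x) * (3 * y - x) * (3 * y - 2 * x))) := by ring
    have e7 : ((y + x) * (2 * y + x) * (3 * y + x) * (3 * y + 2 * x)) *
        ((y - x) * (2 * y - x) * (3 * y - x) * (3 * y - 2 * x)) =
        ((1 * y) ^ 2 - (1 * x) ^ 2) * ((2 * y) ^ 2 - (1 * x) ^ 2) *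
        ((3 * y) ^ 2 - (1 * x) ^ 2) * ((3 * y) ^ 2 - (2 * x) ^ 2) := by ring
    have q1 : (1 * y) ^ 2 - (1 * x) ^ 2 ≠ 0 := by rw [e1]; exact mul_ne_zero g1 p1
    have q2 : (2 * y) ^ 2 - (1 * x) ^ 2 ≠ 0 := by rw [e2]; exact mul_ne_zero g2 p2
    have q3 : (3 * y) ^ 2 - (1 * x) ^ 2 ≠ 0 := by rw [e3]; exact mul_ne_zero g3 p3
    have q4 : (3 * y) ^ 2 - (2 * x) ^ 2 ≠ 0 := by rw [e4]; exact mul_ne_zero g4 p4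
    rw [e5, e6, comb _ _ _ c0 hP hG, e7]
    clear e1 e2 e3 e4 e5 e6 e7 hP hG comb g1 g2 g3 g4 p1 p2 p3 p4
    generalize hq1 : (1 * y) ^ 2 - (1 * x) ^ 2 = Q1 at *
    generalize hq2 : (2 * y) ^ 2 - (1 * x) ^ 2 = Q2 at *
    generalize hq3 : (3 * y) ^ 2 - (1 * x) ^ 2 = Q3 at *
    generalize hq4 : (3 * y) ^ 2 - (2 * x) ^ 2 = Q4 at *
    field_simp
    subst hq1 hq2 hq3 hq4
    ring

/-- Telescoping of `1/k` along an arithmetic progression. -/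
lemma tele_finite (q b : ℝ) (j N : ℕ) :
    ∑ m ∈ Finset.range N, (1 / (q * (m + 1) - b + q * j) - 1 / (q * (m + 1) - b)) =
      ∑ i ∈ Finset.range j, 1 / (q * (N + 1) - b + q * i) -
        ∑ i ∈ Finset.range j, 1 / (q * (i + 1) - b) := by
  induction j with
  | zero => simp
  | succ j ih =>
    rw [Finset.sum_range_succ, Finset.sum_range_succ]
    have h : ∑ m ∈ Finset.range N, (1 / (q * (m + 1) - b + q * (j + 1)) -
        1 / (q * (m + 1) - b + q * j)) =
        1 / (q * (N + 1) - b + q * j) - 1 / (q * (j + 1) - b) := by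
      have := Finset.sum_range_sub (fun m : ℕ => 1 / (q * (m + 1) - b + q * j)) N
      convert this using 1
      · apply Finset.sum_congr rfl
        intro m _
        push_cast
        ring_nf
      · push_cast
        ring_nf
    push_cast
    rw [show ∀ a b c d : ℝ, a + b - (c + d) = (b - d) + (a - c) by intros; ring, ← h, ← ih,
      ← Finset.sum_add_distrib]
    apply Finset.sum_congr rfl
    intro m _
    ring

lemma antisymm_sum (q b : ℝ) (j : ℕ) (hj : q * (j + 1) = 2 * b) :
    ∑ i ∈ Finset.range (j + 1), 1 / (q * (i + 1) - b) = 1 / b := by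
  rw [Finset.sum_range_succ]
  have h0 : ∑ i ∈ Finset.range j, 1 / (q * ((i : ℝ) + 1) - b) = 0 := by
    have := Finset.sum_range_reflect (fun i : ℕ => 1 / (q * ((i : ℝ) + 1) - b)) j
    have h2 : ∑ i ∈ Finset.range j, 1 / (q * (((j - 1 - i : ℕ) : ℝ) + 1) - b) =
        - ∑ i ∈ Finset.range j, 1 / (q * ((i : ℝ) + 1) - b) := by
      rw [← Finset.sum_neg_distrib]
      apply Finset.sum_congr rfl
      intro i hi
      have hi := Finset.mem_range.1 hi
      have : (((j - 1 - i : ℕ) : ℝ)) = j - 1 - i := by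
        rw [Nat.sub_sub, Nat.cast_sub (by omega)]
        push_cast
        ring
      rw [this, ← one_div_neg_eq_neg_one_div]
      congr 1
      linarith
    linarith
  rw [h0, zero_add]
  congr 1
  linarith

lemma key_bound (a b : ℕ) (ha : 0 < a) (hb : 0 < b) :
    |1 / ((b : ℝ) ^ 2 - (a : ℝ) ^ 2)| ≤ 2 * (b : ℝ) ^ 2 * (1 / (a : ℝ) ^ 2) := by
  by_cases h : a = b
  · subst h
    simp
    positivity
  have h1 : (1 : ℝ) ≤ |(b : ℝ) ^ 2 - (a : ℝ) ^ 2| := by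
    have : (1 : ℤ) ≤ |(b : ℤ) ^ 2 - (a : ℤ) ^ 2| := by
      apply Int.one_le_abs
      intro h'
      apply h
      have : (a : ℤ) ^ 2 = (b : ℤ) ^ 2 := by linarith
      have : a ^ 2 = b ^ 2 := by exact_mod_cast this
      exact Nat.pow_left_injective (n := 2) (by norm_num) this
    exact_mod_cast this
  have hb1 : (1 : ℝ) ≤ (b : ℝ) ^ 2 := by
    have : (1 : ℝ) ≤ b := by exact_mod_cast hb
    nlinarith
  have ha0 : (0 : ℝ) < (a : ℝ) ^ 2 := by positivity
  have h2 := neg_abs_le ((b : ℝ) ^ 2 - (a : ℝ) ^ 2)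
  rw [abs_div, abs_one, mul_one_div, div_le_div_iff₀ (by linarith) ha0]
  nlinarith [mul_nonneg (sub_nonneg.2 hb1) (sub_nonneg.2 h1)]

lemma sum_pnat_pow (k : ℕ) (hk : 1 < k) : Summable (fun n : ℕ+ => 1 / (n : ℝ) ^ k) := by
  have := (Real.summable_one_div_nat_pow (p := k)).2 hk
  exact this.comp_injective PNat.coe_injective

lemma gJ_bound (p q : ℕ) (hp : 0 < p) (hq : 0 < q) (m n : ℕ+) :
    |gJ p q m n| ≤ 2 * (p : ℝ) ^ 2 / (q : ℝ) ^ 2 * (n : ℝ) ^ 2 * (1 / (m : ℝ) ^ 2) := by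
  have h := key_bound (q * m) (p * n) (Nat.mul_pos hq m.pos) (Nat.mul_pos hp n.pos)
  unfold gJ
  push_cast at h
  refine h.trans (le_of_eq ?_)
  have := m.pos
  field_simp

lemma gJ_summable (p q : ℕ) (hp : 0 < p) (hq : 0 < q) (n : ℕ+) :
    Summable (fun m : ℕ+ => gJ p q m n) := by
  refine Summable.of_norm_bounded ((sum_pnat_pow 2 (by norm_num)).mul_left
    (2 * (p : ℝ) ^ 2 / (q : ℝ) ^ 2 * (n : ℝ) ^ 2)) (fun m => gJ_bound p q hp hq m n)

lemma hasSum_congr_aux {f g : ℕ+ → ℝ} {a : ℝ} (hg : HasSum g a) (h : ∀ m, f m = g m) :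
    HasSum f a := by
  rwa [show f = g from funext h]

lemma ind_hasSum_one (p n : ℕ+) :
    HasSum (fun m : ℕ+ => if 1 * (m : ℕ) = (p : ℕ) * n then (1 : ℝ) else 0) 1 := by
  have := hasSum_ite_eq (p * n) (1 : ℝ)
  refine hasSum_congr_aux this fun m => ?_
  simp only [one_mul, ← PNat.mul_coe, PNat.coe_inj]

lemma ind_hasSum_two (n : ℕ+) :
    HasSum (fun m : ℕ+ => if 2 * (m : ℕ) = 3 * n then (1 : ℝ) else 0)
      (if 2 ∣ (n : ℕ) then 1 else 0) := by
  split_ifs with h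
  · obtain ⟨k, hk⟩ := h
    have hkp : 0 < k := by have := n.pos; omega
    obtain ⟨K, hK⟩ : ∃ K : ℕ+, (K : ℕ) = 3 * k := ⟨⟨3 * k, by omega⟩, rfl⟩
    have := hasSum_ite_eq K (1 : ℝ)
    refine hasSum_congr_aux this fun m => ?_
    refine if_congr ?_ rfl rfl
    rw [← PNat.coe_inj, hK, hk]
    omega
  · refine hasSum_congr_aux (hasSum_zero : HasSum (fun _ : ℕ+ => (0 : ℝ)) 0) fun m => ?_
    rw [if_neg]
    omega

/-- `∑_m 1/(b² - q²m²)` with `b = p n`, `2 b = q (j+1)`. -/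
lemma gJ_hasSum (p q : ℕ) (hp : 0 < p) (hq : 0 < q) (n : ℕ+) (j : ℕ)
    (hj : q * (j + 1) = 2 * (p * n)) (s : ℝ)
    (hs : HasSum (fun m : ℕ+ => if q * (m : ℕ) = p * n then (1 : ℝ) else 0) s) :
    HasSum (fun m : ℕ+ => gJ p q m n) (-(1 / 2 + s / 4) / ((p : ℝ) * n) ^ 2) := by
  set b : ℝ := (p : ℝ) * n with hb
  have hb0 : 0 < b := by have := n.pos; positivity
  have hjr : (q : ℝ) * (j + 1) = 2 * b := by rw [hb]; exact_mod_cast hj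
  have pt : ∀ m : ℕ+, gJ p q m n + (1 / (4 * b ^ 2)) *
      (if q * (m : ℕ) = p * n then (1 : ℝ) else 0) =
      1 / (2 * b) * (1 / (q * (m : ℝ) - b + q * (j + 1)) - 1 / (q * (m : ℝ) - b)) := by
    intro m
    rw [hjr]
    unfold gJ
    rw [← hb]
    split_ifs with h
    · have : (q : ℝ) * m = b := by rw [hb]; exact_mod_cast h
      rw [this]
      field_simp
      simp
      norm_num
    · have h1 : (q : ℝ) * m - b ≠ 0 := by
        intro h'
        apply h
        have : (q : ℝ) * m = p * n := by rw [← hb]; linarith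
        exact_mod_cast this
      have h2 : (q : ℝ) * m + b ≠ 0 := by positivity
      rw [show (q : ℝ) * m - b + 2 * b = q * m + b by ring,
        show b ^ 2 - ((q : ℝ) * m) ^ 2 = -((q * m - b) * (q * m + b)) by ring]
      field_simp
      ring
  have hS := ((gJ_summable p q hp hq n).hasSum.add (hs.mul_left (1 / (4 * b ^ 2))))
  have hS' := hS
  simp_rw [pt] at hS
  have hS2 := (hasSum_pnat_iff_hasSum_succ (f := fun m : ℕ =>
    1 / (2 * b) * (1 / (q * (m : ℝ) - b + q * (j + 1)) - 1 / (q * (m : ℝ) - b)))).1 hS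
  have hT := hS2.tendsto_sum_nat
  have hT2 : Tendsto (fun N : ℕ => 1 / (2 * b) *
      (∑ i ∈ Finset.range (j + 1), 1 / ((q : ℝ) * (N + 1) - b + q * i) - 1 / b)) atTop
      (𝓝 (1 / (2 * b) * (∑ i ∈ Finset.range (j + 1), 0 - 1 / b))) := by
    refine Tendsto.const_mul _ (Tendsto.sub_const (tendsto_finsetSum _ fun i _ => ?_) _)
    simp_rw [one_div]
    apply Tendsto.inv_tendsto_atTop
    apply tendsto_atTop_add_const_right
    apply tendsto_atTop_add_const_right
    apply Tendsto.const_mul_atTop (by exact_mod_cast hq)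
    apply tendsto_atTop_add_const_right
    exact tendsto_natCast_atTop_atTop
  have heq := tendsto_nhds_unique hT (hT2.congr fun N => by
    rw [← Finset.mul_sum]
    congr 1
    have := tele_finite q b (j + 1) N
    push_cast at this ⊢
    rw [this, antisymm_sum _ _ _ hjr])
  have : ∑' m : ℕ+, gJ p q m n = -(1 / 2 + s / 4) / b ^ 2 := by
    have : ∑' m : ℕ+, gJ p q m n = 1 / (2 * b) * (∑ i ∈ Finset.range (j + 1), 0 - 1 / b)
      - 1 / (4 * b ^ 2) * s := by linarith
    rw [this]
    simp
    field_simp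
    ring
  rw [← this]
  exact (gJ_summable p q hp hq n).hasSum

lemma prod_summable (k l : ℕ) (hk : 1 < k) (hl : 1 < l) :
    Summable (fun x : ℕ+ × ℕ+ => 1 / (x.1 : ℝ) ^ k * (1 / (x.2 : ℝ) ^ l)) :=
  (sum_pnat_pow k hk).mul_of_nonneg (sum_pnat_pow l hl) (fun _ => by positivity)
    (fun _ => by positivity)

lemma gJ_summable_prod (p q : ℕ) (hp : 0 < p) (hq : 0 < q) :
    Summable (fun x : ℕ+ × ℕ+ => 1 / (x.2 : ℝ) ^ 5 * gJ p q x.1 x.2) := by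
  refine Summable.of_norm_bounded ((prod_summable 2 3 (by norm_num) (by norm_num)).mul_left
    (2 * (p : ℝ) ^ 2 / (q : ℝ) ^ 2)) (fun x => ?_)
  rw [Real.norm_eq_abs, abs_mul, abs_of_nonneg (by positivity)]
  have := mul_le_mul_of_nonneg_left (gJ_bound p q hp hq x.1 x.2)
    (show (0 : ℝ) ≤ 1 / (x.2 : ℝ) ^ 5 by positivity)
  refine this.trans (le_of_eq ?_)
  have h1 : (x.1 : ℝ) ≠ 0 := by have := x.1.pos; positivity
  have h2 : (x.2 : ℝ) ≠ 0 := by have := x.2.pos; positivity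
  field_simp

lemma ind_summable_prod (p q : ℕ) (hq : 0 < q) :
    Summable (fun x : ℕ+ × ℕ+ => 1 / (x.2 : ℝ) ^ 7 *
      (if q * (x.1 : ℕ) = p * x.2 then (1 : ℝ) else 0)) := by
  refine Summable.of_norm_bounded ((prod_summable 2 5 (by norm_num) (by norm_num)).mul_left
    ((p : ℝ) ^ 2)) (fun x => ?_)
  have h1 : (0 : ℝ) < (x.1 : ℝ) := by have := x.1.pos; positivity
  have h2 : (0 : ℝ) < (x.2 : ℝ) := by have := x.2.pos; positivity
  rw [Real.norm_eq_abs, abs_of_nonneg (by positivity)]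
  split_ifs with h
  · have h : (q : ℝ) * x.1 = p * x.2 := by exact_mod_cast h
    have hq' : (1 : ℝ) ≤ q := by exact_mod_cast hq
    have hle : (x.1 : ℝ) ≤ p * x.2 := by nlinarith
    have : (x.1 : ℝ) ^ 2 ≤ (p * x.2) ^ 2 := by gcongr
    rw [mul_one, show (p : ℝ) ^ 2 * (1 / (x.1 : ℝ) ^ 2 * (1 / (x.2 : ℝ) ^ 5)) =
      (p : ℝ) ^ 2 / ((x.1 : ℝ) ^ 2 * (x.2 : ℝ) ^ 5) by field_simp,
      div_le_div_iff₀ (by positivity) (by positivity)]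
    have h5 : (0 : ℝ) < (x.2 : ℝ) ^ 5 := by positivity
    nlinarith
  · rw [mul_zero]
    positivity

lemma gF_summable : Summable (fun x : ℕ+ × ℕ+ => gF x.1 x.2) := by
  refine Summable.of_norm_bounded (prod_summable 2 5 (by norm_num) (by norm_num)) (fun x => ?_)
  have h1 : (0 : ℝ) < (x.1 : ℝ) := by have := x.1.pos; positivity
  have h2 : (0 : ℝ) < (x.2 : ℝ) := by have := x.2.pos; positivity
  unfold gF
  rw [Real.norm_eq_abs, abs_of_nonneg (by positivity), ← one_div_mul_one_div_rev,
    one_div_mul_one_div_rev, one_div_mul_one_div_rev]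
  apply one_div_le_one_div_of_le (by positivity)
  calc (x.2 : ℝ) ^ 5 * (x.1 : ℝ) ^ 2 = (x.1 : ℝ) ^ 2 * x.2 * x.2 * x.2 * x.2 * x.2 := by ring
    _ ≤ _ := by
      gcongr <;> linarith

lemma diff_summable : Summable (fun x : ℕ+ × ℕ+ => gF x.1 x.2 - gF x.1 (-x.2)) := by
  simp_rw [gF_identity]
  have a1 := gJ_summable_prod 1 1 (by norm_num) (by norm_num)
  have a2 := gJ_summable_prod 2 1 (by norm_num) (by norm_num)
  have a3 := gJ_summable_prod 3 1 (by norm_num) (by norm_num)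
  have a4 := gJ_summable_prod 3 2 (by norm_num) (by norm_num)
  have b1 := ind_summable_prod 1 1 (by norm_num)
  have b2 := ind_summable_prod 2 1 (by norm_num)
  have b3 := ind_summable_prod 3 1 (by norm_num)
  have b4 := ind_summable_prod 3 2 (by norm_num)
  have := (((prod_summable 2 5 (by norm_num) (by norm_num)).mul_left (1 / 9)).add
    (((a1.add a2).sub (a3.mul_left (1 / 9))).sub (a4.mul_left (64 / 9)))).add
    (((b1.sub (b2.mul_left (11 / 16))).add (b3.mul_left (4 / 81))).add (b4.mul_left (16 / 81)))
  refine this.congr fun x => ?_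
  push_cast
  ring

lemma gF_neg_summable : Summable (fun x : ℕ+ × ℕ+ => gF x.1 (-x.2)) :=
  (gF_summable.sub diff_summable).congr fun x => by ring

/-- The symmetry `n ↦ -m-n`. -/
lemma gF_symm (x y : ℝ) : gF x (-x - y) = - gF x y := by
  unfold gF
  rw [← one_div_neg_eq_neg_one_div]
  congr 1
  ring

lemma inner_neg (m : ℕ+) : ∑' n : ℕ+, gF m n = - ∑' n : ℕ+, gF m (-n) := by
  have s1 : Summable (fun n : ℕ+ => gF m n) := gF_summable.prod_factor m
  have s2 : Summable (fun n : ℕ+ => gF m (-n)) := gF_neg_summable.prod_factor m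
  let g : ℤ → ℝ := fun k => gF m k
  have hg : Summable g := by
    rw [summable_int_iff_summable_nat_and_neg]
    constructor
    · rw [← summable_pnat_iff_summable_nat]
      simpa [g] using s1
    · rw [← summable_pnat_iff_summable_nat (f := fun n : ℕ => g (-(n : ℤ)))]
      simpa [g] using s2
  have h0 : ∑' k : ℤ, g k = 0 := by
    have h := (Equiv.subLeft (-(m : ℤ))).tsum_eq g
    have h' : ∀ k : ℤ, g ((Equiv.subLeft (-(m : ℤ))) k) = - g k := by
      intro k
      simp only [g, Equiv.subLeft_apply]
      rw [← gF_symm]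
      push_cast
      rfl
    simp_rw [h', tsum_neg] at h
    linarith
  rw [tsum_int_eq_zero_add_tsum_pnat hg] at h0
  have g0 : g 0 = 0 := by simp [g, gF]
  rw [g0] at h0
  simp only [g] at h0
  push_cast at h0
  linarith

lemma diff_hasSum (n : ℕ+) : HasSum (fun m : ℕ+ => gF m n - gF m (-n))
    (1 / 9 * (∑' m : ℕ+, 1 / (m : ℝ) ^ 2) * (1 / (n : ℝ) ^ 5) - 37 / 216 * (1 / (n : ℝ) ^ 7)
      + 32 / 81 * (1 / (n : ℝ) ^ 7 * (if 2 ∣ (n : ℕ) then 1 else 0))) := by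
  have hn : (n : ℝ) ≠ 0 := by have := n.pos; positivity
  have i1 := ind_hasSum_one 1 n
  have i2 := ind_hasSum_one 2 n
  have i3 := ind_hasSum_one 3 n
  have i4 := ind_hasSum_two n
  have hn' := n.pos
  have a1 := gJ_hasSum 1 1 (by norm_num) (by norm_num) n (2 * n - 1) (by omega) _ i1
  have a2 := gJ_hasSum 2 1 (by norm_num) (by norm_num) n (4 * n - 1) (by omega) _ i2
  have a3 := gJ_hasSum 3 1 (by norm_num) (by norm_num) n (6 * n - 1) (by omega) _ i3
  have a4 := gJ_hasSum 3 2 (by norm_num) (by norm_num) n (3 * n - 1) (by omega) _ i4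
  have z2 := (sum_pnat_pow 2 (by norm_num)).hasSum
  have := (((z2.mul_right (1 / (n : ℝ) ^ 5)).mul_left (1 / 9)).add
    ((((a1.add a2).sub (a3.mul_left (1 / 9))).sub (a4.mul_left (64 / 9))).mul_left
      (1 / (n : ℝ) ^ 5))).add
    ((((i1.sub (i2.mul_left (11 / 16))).add (i3.mul_left (4 / 81))).add
      (i4.mul_left (16 / 81))).mul_left (1 / (n : ℝ) ^ 7))
  have key := hasSum_congr_aux (f := fun m : ℕ+ => gF m n - gF m (-n)) this (fun m => by
    rw [gF_identity]
    push_cast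
    rfl)
  have hval : ∀ {f : ℕ+ → ℝ} {a b : ℝ}, HasSum f a → b = a → HasSum f b :=
    fun h e => e ▸ h
  refine hval key ?_
  · push_cast
    generalize (if 2 ∣ (n : ℕ) then (1 : ℝ) else 0) = t
    field_simp
    ring

lemma even_hasSum : HasSum (fun n : ℕ+ => 1 / (n : ℝ) ^ 7 * (if 2 ∣ (n : ℕ) then (1 : ℝ) else 0))
    (1 / 128 * ∑' n : ℕ+, 1 / (n : ℝ) ^ 7) := by
  have hinj : Function.Injective (fun n : ℕ+ => 2 * n) := fun a b h => mul_left_cancel h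
  rw [← hinj.hasSum_iff]
  · refine hasSum_congr_aux ((sum_pnat_pow 7 (by norm_num)).hasSum.mul_left (1 / 128))
      fun n => ?_
    have hn : (n : ℝ) ≠ 0 := by have := n.pos; positivity
    have h2 : ((2 * n : ℕ+) : ℕ) = 2 * (n : ℕ) := rfl
    change 1 / (((2 * n : ℕ+) : ℕ) : ℝ) ^ 7 *
      (if 2 ∣ ((2 * n : ℕ+) : ℕ) then (1 : ℝ) else 0) = _
    rw [if_pos (by rw [h2]; exact Dvd.intro _ rfl), h2]
    push_cast
    field_simp
    norm_num
  · intro n hn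
    rw [if_neg, mul_zero]
    rintro ⟨k, hk⟩
    apply hn
    have hkp : 0 < k := by have := n.pos; omega
    exact ⟨⟨k, hkp⟩, PNat.coe_injective (by rw [hk]; rfl)⟩

lemma real_value : zetaG2 2 1 1 1 1 1 =
    1 / 18 * (∑' m : ℕ+, 1 / (m : ℝ) ^ 2) * (∑' m : ℕ+, 1 / (m : ℝ) ^ 5)
      - 109 / 1296 * (∑' m : ℕ+, 1 / (m : ℝ) ^ 7) := by
  have h0 : zetaG2 2 1 1 1 1 1 = ∑' (m : ℕ+) (n : ℕ+), gF m n := by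
    unfold zetaG2 gF
    simp only [pow_one]
  have h1 : 2 * zetaG2 2 1 1 1 1 1 = ∑' (m : ℕ+) (n : ℕ+), (gF m n - gF m (-n)) := by
    rw [h0, ← tsum_mul_left]
    congr 1
    funext m
    rw [(gF_summable.prod_factor m).tsum_sub (gF_neg_summable.prod_factor m), two_mul]
    nth_rewrite 2 [inner_neg]
    ring
  have h2 : ∑' (m : ℕ+) (n : ℕ+), (gF m n - gF m (-n)) =
      ∑' (n : ℕ+) (m : ℕ+), (gF m n - gF m (-n)) :=
    (Summable.tsum_comm (f := fun (m n : ℕ+) => gF m n - gF m (-n)) diff_summable).symm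
  rw [h2] at h1
  simp_rw [fun n => (diff_hasSum n).tsum_eq] at h1
  have h3 := ((((sum_pnat_pow 5 (by norm_num)).hasSum.mul_left
    (1 / 9 * (∑' m : ℕ+, 1 / (m : ℝ) ^ 2))).sub
    ((sum_pnat_pow 7 (by norm_num)).hasSum.mul_left (37 / 216))).add
    (even_hasSum.mul_left (32 / 81))).tsum_eq
  rw [h3] at h1
  linarith

lemma zeta_pnat (k : ℕ) (hk : 1 < k) :
    riemannZeta k = ((∑' m : ℕ+, 1 / (m : ℝ) ^ k : ℝ) : ℂ) := by
  rw [zeta_nat_eq_tsum_of_gt_one hk, Complex.ofReal_tsum,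
    ← tsum_pnat_eq_tsum_of_eq_zero (f := fun n : ℕ => 1 / (n : ℂ) ^ k)]
  · push_cast
    rfl
  · have : k ≠ 0 := by omega
    simp [this]

theorem zetaG2_two_one_one_one_one_one :
    (zetaG2 2 1 1 1 1 1 : ℂ) =
      (1 / 18) * riemannZeta 2 * riemannZeta 5 - (109 / 1296) * riemannZeta 7 := by
  have z2 := zeta_pnat 2 (by norm_num)
  have z5 := zeta_pnat 5 (by norm_num)
  have z7 := zeta_pnat 7 (by norm_num)
  push_cast at z2 z5 z7
  rw [real_value, z2, z5, z7]
  push_cast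
  rfl
end

section
/- The special value ζ₂(4,2,2,1,1,1; G₂) equals (1/18)·ζ(4)·ζ(7) + (595/648)·ζ(2)·ζ(9) − (73201/46656)·ζ(11). -/
namespace G2Proof

/-- The summand, with the convention `1/0 = 0`, so that it vanishes on the walls. -/
noncomputable def F (x y : ℝ) : ℝ :=
  1 / (x ^ 4 * y ^ 2 * (x + y) ^ 2 * (x + 2 * y) ^ 1 * (x + 3 * y) ^ 1 * (2 * x + 3 * y) ^ 1)

lemma hs_conv {ι : Type} {f g : ι → ℝ} {a b : ℝ} (h : HasSum g b) (hf : ∀ i, f i = g i)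
    (hab : a = b) : HasSum f a := by
  rw [hab, show f = g from funext hf]
  exact h

lemma sum_conv {ι : Type} {f g : ι → ℝ} (h : Summable g) (hf : ∀ i, f i = g i) :
    Summable f := by
  rw [show f = g from funext hf]
  exact h

lemma F_neg (x y : ℝ) : F (-x) (-y) = -F x y := by
  unfold F
  rw [← one_div_neg_eq_neg_one_div]
  congr 1
  ring

lemma F_refl (x y : ℝ) : F x (-x - y) = -F x y := by
  unfold F
  rw [← one_div_neg_eq_neg_one_div]
  congr 1
  ring

lemma inv_int_le (k : ℤ) : |((k : ℝ))⁻¹| ≤ 1 := by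
  rcases eq_or_ne k 0 with rfl | hk
  · simp
  · rw [abs_inv]
    apply inv_le_one_of_one_le₀
    exact_mod_cast Int.one_le_abs hk

lemma F_bound (m n : ℤ) : |F m n| ≤ |((m : ℝ) ^ 4)⁻¹| * |((n : ℝ) ^ 2)⁻¹| := by
  have h1 := inv_int_le (m + n)
  have h2 := inv_int_le (m + 2 * n)
  have h3 := inv_int_le (m + 3 * n)
  have h4 := inv_int_le (2 * m + 3 * n)
  push_cast at h1 h2 h3 h4
  have : F m n = ((m : ℝ) ^ 4)⁻¹ * ((n : ℝ) ^ 2)⁻¹ * (((m : ℝ) + n)⁻¹ * ((m : ℝ) + n)⁻¹ *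
      ((m : ℝ) + 2 * n)⁻¹ * ((m : ℝ) + 3 * n)⁻¹ * (2 * (m : ℝ) + 3 * n)⁻¹) := by
    unfold F
    simp only [one_div, mul_inv, pow_one, ← inv_pow]
    ring
  rw [this, abs_mul, abs_mul]
  apply mul_le_of_le_one_right (by positivity)
  simp only [abs_mul]
  have := abs_nonneg ((m : ℝ) + n)⁻¹
  refine mul_le_one₀ (mul_le_one₀ (mul_le_one₀ (mul_le_one₀ h1 (abs_nonneg _) h1)
    (abs_nonneg _) h2) (abs_nonneg _) h3) (abs_nonneg _) h4

lemma summable_bound : Summable (fun p : ℕ × ℕ => |((p.1 : ℝ) ^ 4)⁻¹| * |((p.2 : ℝ) ^ 2)⁻¹|) := by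
  have h4 : Summable (fun m : ℕ => |((m : ℝ) ^ 4)⁻¹|) :=
    (Real.summable_nat_pow_inv.mpr (by norm_num)).abs
  have h2 : Summable (fun m : ℕ => |((m : ℝ) ^ 2)⁻¹|) :=
    (Real.summable_nat_pow_inv.mpr (by norm_num)).abs
  exact h4.mul_of_nonneg h2 (fun _ => abs_nonneg _) (fun _ => abs_nonneg _)

lemma summable_a : Summable (fun p : ℕ × ℕ => F p.1 p.2) := by
  refine Summable.of_norm_bounded summable_bound fun p => ?_
  have := F_bound (p.1 : ℤ) (p.2 : ℤ)
  push_cast at this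
  exact this

lemma summable_b : Summable (fun p : ℕ × ℕ => F p.1 (-p.2)) := by
  refine Summable.of_norm_bounded summable_bound fun p => ?_
  have := F_bound (p.1 : ℤ) (-(p.2 : ℤ))
  push_cast at this
  rw [neg_sq] at this
  exact this

lemma half1 (m : ℕ) : ∑' n : ℕ, F m n + ∑' n : ℕ, F m (-n) = 0 := by
  have ha := (summable_a.prod_factor m).hasSum
  have hb := (summable_b.prod_factor m).hasSum
  have hab : HasSum (fun n : ℤ => F m n) (∑' n : ℕ, F m n + ∑' n : ℕ, F m (-n)) := by
    have := HasSum.of_nat_of_neg (f := fun n : ℤ => F m n) (by simpa using ha) (by simpa using hb)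
    simpa [F] using this
  have h2 : HasSum (fun n : ℤ => F m (-m - n)) (∑' n : ℕ, F m n + ∑' n : ℕ, F m (-n)) := by
    have := (Equiv.subLeft (-(m : ℤ))).hasSum_iff.mpr hab
    simpa [Function.comp_def] using this
  simp only [F_refl] at h2
  have := h2.unique hab.neg
  linarith

lemma half2 (n : ℕ) (c : ℝ) (hc : HasSum (fun m : ℤ => F m n) c) :
    ∑' m : ℕ, F m n - ∑' m : ℕ, F m (-n) = c := by
  have ha := (summable_a.prod_symm.prod_factor n).hasSum
  have hb := (summable_b.prod_symm.prod_factor n).hasSum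
  have hb' : HasSum (fun m : ℕ => F (-m) n) (-∑' m : ℕ, F m (-n)) := by
    refine hs_conv hb.neg (fun m => ?_) rfl
    have := F_neg m (-n)
    rw [neg_neg] at this
    exact this
  have := HasSum.of_nat_of_neg (f := fun m : ℤ => F m n) (by simpa using ha) (by simpa using hb')
  have := this.unique hc
  simpa [F, ← sub_eq_add_neg] using this

lemma main_split (c : ℕ → ℝ) (hc : ∀ n : ℕ, HasSum (fun m : ℤ => F m n) (c n)) :
    2 * ∑' (m : ℕ) (n : ℕ), F m n = ∑' n, c n := by
  have h1 : ∑' (m : ℕ) (n : ℕ), F m n + ∑' (m : ℕ) (n : ℕ), F m (-n) = 0 := by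
    rw [← summable_a.prod.tsum_add summable_b.prod]
    simp [half1]
  have h2 : ∑' (m : ℕ) (n : ℕ), F m n - ∑' (m : ℕ) (n : ℕ), F m (-n) = ∑' n, c n := by
    rw [← summable_a.tsum_comm (f := fun m n : ℕ => F m n),
      ← summable_b.tsum_comm (f := fun m n : ℕ => F m (-n))]
    refine (summable_a.prod_symm.prod.tsum_sub summable_b.prod_symm.prod).symm.trans ?_
    exact tsum_congr fun n => half2 n _ (hc n)
  linarith

lemma tele_nat : HasSum (fun n : ℕ => ((n : ℝ) + 1)⁻¹ - (n : ℝ)⁻¹) 0 := by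
  have h : HasSum (fun n : ℕ => ((n : ℝ) + 1)⁻¹ - ((n : ℝ) + 1 + 1)⁻¹) 1 := by
    rw [hasSum_iff_tendsto_nat_of_nonneg]
    · have : ∀ N : ℕ, ∑ n ∈ Finset.range N, (((n : ℝ) + 1)⁻¹ - ((n : ℝ) + 1 + 1)⁻¹)
          = 1 - 1 / ((N : ℝ) + 1) := by
        intro N
        induction N with
        | zero => simp
        | succ k ih => rw [Finset.sum_range_succ, ih]; push_cast; simp only [one_div]; ring
      simp only [this]
      simpa using tendsto_one_div_add_atTop_nhds_zero_nat.const_sub (1 : ℝ)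
    · intro n
      rw [sub_nonneg]
      gcongr
      linarith
  rw [← hasSum_nat_add_iff' 1]
  simpa using h.neg

lemma tele_one : HasSum (fun m : ℤ => ((m : ℝ) + 1)⁻¹ - (m : ℝ)⁻¹) 0 := by
  have := HasSum.of_nat_of_neg_add_one (f := fun m : ℤ => ((m : ℝ) + 1)⁻¹ - (m : ℝ)⁻¹)
    (m := 0) (m' := 0) (by simpa using tele_nat) (by
      refine hs_conv tele_nat (fun n => ?_) rfl
      push_cast
      rw [show -((n : ℝ) + 1) + 1 = -(n : ℝ) by ring, inv_neg, inv_neg]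
      ring)
  simpa using this

lemma tele (a : ℕ) : HasSum (fun m : ℤ => ((m : ℝ) + a)⁻¹ - (m : ℝ)⁻¹) 0 := by
  induction a with
  | zero => simp
  | succ k ih =>
    have h := (Equiv.addRight (1 : ℤ)).hasSum_iff.mpr ih
    have := h.add tele_one
    refine hs_conv this (fun m => ?_) ?_
    · simp only [Function.comp_apply, Equiv.coe_addRight]
      push_cast
      rw [show (m : ℝ) + 1 + k = m + (k + 1) by ring]
      ring
    · simp

/-- centred simple pole at a half-integer -/
lemma half_pole (a : ℕ) :
    HasSum (fun m : ℤ => (2 * (m : ℝ) + a)⁻¹ - ((m : ℝ)⁻¹ + ((m : ℝ) + a)⁻¹) / 4) 0 := by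
  have hs : Summable (fun m : ℤ => (2 * (m : ℝ) + a)⁻¹ - ((m : ℝ)⁻¹ + ((m : ℝ) + a)⁻¹) / 4) := by
    have h := (tele a).summable.comp_injective (i := fun m : ℤ => 2 * m)
      (mul_right_injective₀ two_ne_zero)
    refine sum_conv (h.sub ((tele a).summable.mul_left (1 / 4))) fun m => ?_
    simp only [Function.comp_apply]
    push_cast
    rw [mul_inv]
    ring
  have h2 := (Equiv.subLeft (-(a : ℤ))).hasSum_iff.mpr hs.hasSum
  have h3 := h2.unique (f := _) (a₁ := _) (a₂ := -∑' m : ℤ, ((2 * (m : ℝ) + a)⁻¹ - ((m : ℝ)⁻¹ + ((m : ℝ) + a)⁻¹) / 4)) (by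
    refine hs_conv hs.hasSum.neg (fun m => ?_) rfl
    simp only [Function.comp_apply, Equiv.subLeft_apply]
    push_cast
    rw [show 2 * (-(a : ℝ) - m) + a = -(2 * m + a) by ring,
      show -(a : ℝ) - m + a = -m by ring, show -(a : ℝ) - m = -(m + a) by ring]
    simp only [inv_neg]
    ring)
  have h4 : ∑' m : ℤ, ((2 * (m : ℝ) + a)⁻¹ - ((m : ℝ)⁻¹ + ((m : ℝ) + a)⁻¹) / 4) = 0 := by linarith
  rw [← h4]
  exact hs.hasSum

/-- zeta value as a real series -/
noncomputable def z (k : ℕ) : ℝ := ∑' n : ℕ, 1 / (n : ℝ) ^ k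

lemma z_hasSum (k : ℕ) (hk : 1 < k) : HasSum (fun n : ℕ => ((n : ℝ) ^ k)⁻¹) (z k) := by
  unfold z
  simp only [one_div]
  exact (Real.summable_nat_pow_inv.mpr hk).hasSum

lemma z_eq (k : ℕ) (hk : 1 < k) : riemannZeta k = (z k : ℂ) := by
  rw [zeta_nat_eq_tsum_of_gt_one hk]
  unfold z
  push_cast
  rfl

lemma even_int (k : ℕ) (hk : 1 < k) (he : Even k) :
    HasSum (fun m : ℤ => ((m : ℝ) ^ k)⁻¹) (2 * z k) := by
  have h := z_hasSum k hk
  have := HasSum.of_nat_of_neg (f := fun m : ℤ => ((m : ℝ) ^ k)⁻¹) (by simpa using h)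
    (by simpa [he.neg_pow] using h)
  refine hs_conv this (fun _ => rfl) ?_
  simp [show k ≠ 0 by omega]
  ring

lemma odd_int : HasSum (fun m : ℤ => ((m : ℝ) ^ 3)⁻¹) 0 := by
  have h := z_hasSum 3 (by norm_num)
  have := HasSum.of_nat_of_neg (f := fun m : ℤ => ((m : ℝ) ^ 3)⁻¹) (by simpa using h)
    (by simpa [Odd.neg_pow (show Odd 3 by decide), inv_neg] using h.neg)
  simpa using this

lemma shift_two (n : ℕ) : HasSum (fun m : ℤ => (((m : ℝ) + n) ^ 2)⁻¹) (2 * z 2) := by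
  have := (Equiv.addRight (n : ℤ)).hasSum_iff.mpr (even_int 2 (by norm_num) (by decide))
  simpa [Function.comp_def] using this

/-- partial fractions with wall corrections -/
lemma pf (m : ℤ) (n : ℕ) (hn : n ≠ 0) :
    F m n = 1 / 18 * ((n : ℝ) ^ 7)⁻¹ * ((m : ℝ) ^ 4)⁻¹ - 7 / 36 * ((n : ℝ) ^ 8)⁻¹ * ((m : ℝ) ^ 3)⁻¹
      + 271 / 648 * ((n : ℝ) ^ 9)⁻¹ * ((m : ℝ) ^ 2)⁻¹
      + 1 / 2 * ((n : ℝ) ^ 9)⁻¹ * (((m : ℝ) + n) ^ 2)⁻¹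
      + ((n : ℝ) ^ 10)⁻¹ * (1 / 4 * (((m : ℝ) + n)⁻¹ - (m : ℝ)⁻¹)
        - 1 / 16 * (((m : ℝ) + (2 * n : ℕ))⁻¹ - (m : ℝ)⁻¹)
        + 257 / 972 * (((m : ℝ) + (3 * n : ℕ))⁻¹ - (m : ℝ)⁻¹)
        + 256 / 243 * ((2 * (m : ℝ) + (3 * n : ℕ))⁻¹
            - ((m : ℝ)⁻¹ + ((m : ℝ) + (3 * n : ℕ))⁻¹) / 4))
      - ((n : ℝ) ^ 11)⁻¹ * ((if m = 0 then 24967 / 23328 else 0)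
        + (if m = -(n : ℤ) then 19 / 8 else 0) + (if m = -(2 * n : ℤ) then -5 / 16 else 0)
        + (if m = -(3 * n : ℤ) then 1 / 243 else 0)
        + (if 2 * m = -(3 * n : ℤ) then 512 / 243 else 0)) := by
  have hn' : (n : ℝ) ≠ 0 := by exact_mod_cast hn
  push_cast
  by_cases h0 : m = 0
  · subst h0
    rw [if_pos rfl, if_neg (by omega), if_neg (by omega), if_neg (by omega), if_neg (by omega)]
    simp [F]
    field_simp
    norm_num
  by_cases h1 : m = -(n : ℤ)
  · subst h1
    rw [if_neg (by omega), if_pos rfl, if_neg (by omega), if_neg (by omega), if_neg (by omega)]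
    push_cast
    rw [show -(n : ℝ) + n = 0 by ring, show -(n : ℝ) + 2 * n = n by ring,
      show -(n : ℝ) + 3 * n = 2 * n by ring, show 2 * -(n : ℝ) + 3 * n = n by ring]
    simp [F]
    field_simp
    norm_num
  by_cases h2 : m = -(2 * n : ℤ)
  · subst h2
    rw [if_neg (by omega), if_neg (by omega), if_pos rfl, if_neg (by omega), if_neg (by omega)]
    push_cast
    rw [show -(2 * n : ℝ) + n = -n by ring, show -(2 * n : ℝ) + 2 * n = 0 by ring,
      show -(2 * n : ℝ) + 3 * n = n by ring, show 2 * -(2 * n : ℝ) + 3 * n = -n by ring]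
    simp [F]
    field_simp
    norm_num
  by_cases h3 : m = -(3 * n : ℤ)
  · subst h3
    rw [if_neg (by omega), if_neg (by omega), if_neg (by omega), if_pos rfl, if_neg (by omega)]
    push_cast
    rw [show -(3 * n : ℝ) + n = -(2 * n) by ring, show -(3 * n : ℝ) + 2 * n = -n by ring,
      show -(3 * n : ℝ) + 3 * n = 0 by ring, show 2 * -(3 * n : ℝ) + 3 * n = -(3 * n) by ring]
    simp [F]
    field_simp
    norm_num
  rw [if_neg h0, if_neg h1, if_neg h2, if_neg h3]
  have e0 : (m : ℝ) ≠ 0 := by exact_mod_cast h0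
  have e1 : (m : ℝ) + n ≠ 0 := by
    intro h; apply h1; have : m + (n : ℤ) = 0 := by exact_mod_cast h
    omega
  have e2 : (m : ℝ) + 2 * n ≠ 0 := by
    intro h; apply h2; have : m + 2 * (n : ℤ) = 0 := by exact_mod_cast h
    omega
  have e3 : (m : ℝ) + 3 * n ≠ 0 := by
    intro h; apply h3; have : m + 3 * (n : ℤ) = 0 := by exact_mod_cast h
    omega
  by_cases h4 : 2 * m = -(3 * n : ℤ)
  · rw [if_pos h4]
    have hm : (m : ℝ) = -(3 / 2 * n) := by
      have : 2 * (m : ℝ) = -(3 * n) := by exact_mod_cast h4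
      linarith
    rw [hm]
    rw [show -(3 / 2 * n : ℝ) + n = -(n / 2) by ring, show -(3 / 2 * n : ℝ) + 2 * n = n / 2 by ring,
      show -(3 / 2 * n : ℝ) + 3 * n = 3 / 2 * n by ring,
      show 2 * -(3 / 2 * n : ℝ) + 3 * n = 0 by ring]
    have hF : F (-(3 / 2 * n)) n = 0 := by
      unfold F
      rw [show 2 * -(3 / 2 * n : ℝ) + 3 * n = 0 by ring]
      simp
    rw [hF]
    field_simp
    norm_num
  · rw [if_neg h4]
    have e4 : 2 * (m : ℝ) + 3 * n ≠ 0 := by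
      intro h; apply h4; have : 2 * m + 3 * (n : ℤ) = 0 := by exact_mod_cast h
      omega
    unfold F
    generalize (m : ℝ) = x at *
    generalize (n : ℝ) = y at *
    obtain ⟨p, hp⟩ : ∃ p, p = x + y := ⟨_, rfl⟩
    obtain ⟨q, hq⟩ : ∃ q, q = x + 2 * y := ⟨_, rfl⟩
    obtain ⟨r, hr⟩ : ∃ r, r = x + 3 * y := ⟨_, rfl⟩
    obtain ⟨t, ht⟩ : ∃ t, t = 2 * x + 3 * y := ⟨_, rfl⟩
    rw [← hp] at e1
    rw [← hq] at e2
    rw [← hr] at e3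
    rw [← ht] at e4
    rw [← hp, ← hq, ← hr, ← ht]
    field_simp
    rw [hp, hq, hr, ht]
    ring

/-- the row sums -/
noncomputable def c (n : ℕ) : ℝ :=
  1 / 9 * z 4 * ((n : ℝ) ^ 7)⁻¹ + 595 / 324 * z 2 * ((n : ℝ) ^ 9)⁻¹
    - (24967 / 23328 + 19 / 8 - 5 / 16 + 1 / 243) * ((n : ℝ) ^ 11)⁻¹
    - 512 / 243 * (if Even n then ((n : ℝ) ^ 11)⁻¹ else 0)

lemma ind (n : ℕ) : HasSum (fun m : ℤ => if 2 * m = -(3 * n : ℤ) then (512 / 243 : ℝ) else 0)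
    (if Even n then 512 / 243 else 0) := by
  split_ifs with h
  · obtain ⟨k, rfl⟩ := h
    refine hs_conv (hasSum_ite_eq (-(3 * k : ℤ)) (512 / 243 : ℝ)) (fun m => ?_) rfl
    refine if_congr ?_ rfl rfl
    push_cast
    omega
  · refine hs_conv hasSum_zero (fun m => ?_) rfl
    rw [if_neg]
    intro h'
    apply h
    rw [Nat.even_iff]
    omega

lemma row (n : ℕ) : HasSum (fun m : ℤ => F m n) (c n) := by
  rcases eq_or_ne n 0 with rfl | hn
  · simp [F, c]
  simp only [fun m => pf m n hn]
  have h := ((((((even_int 4 (by norm_num) (by decide)).mul_left (1 / 18 * ((n : ℝ) ^ 7)⁻¹)).sub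
    (odd_int.mul_left (7 / 36 * ((n : ℝ) ^ 8)⁻¹))).add
    ((even_int 2 (by norm_num) (by decide)).mul_left (271 / 648 * ((n : ℝ) ^ 9)⁻¹))).add
    ((shift_two n).mul_left (1 / 2 * ((n : ℝ) ^ 9)⁻¹))).add
    ((((((tele n).mul_left (1 / 4)).sub ((tele (2 * n)).mul_left (1 / 16))).add
      ((tele (3 * n)).mul_left (257 / 972))).add
      ((half_pole (3 * n)).mul_left (256 / 243))).mul_left (((n : ℝ) ^ 10)⁻¹))).sub
    ((((((hasSum_ite_eq (0 : ℤ) (24967 / 23328 : ℝ)).add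
      (hasSum_ite_eq (-(n : ℤ)) (19 / 8 : ℝ))).add
      (hasSum_ite_eq (-(2 * n : ℤ)) (-5 / 16 : ℝ))).add
      (hasSum_ite_eq (-(3 * n : ℤ)) (1 / 243 : ℝ))).add
      (ind n)).mul_left (((n : ℝ) ^ 11)⁻¹))
  refine hs_conv h (fun m => rfl) ?_
  unfold c
  split_ifs <;> ring

lemma even_sum : HasSum (fun n : ℕ => if Even n then ((n : ℝ) ^ 11)⁻¹ else 0) (z 11 / 2 ^ 11) := by
  have hi : Function.Injective (fun n : ℕ => 2 * n) := mul_right_injective₀ two_ne_zero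
  rw [← hi.hasSum_iff]
  · refine hs_conv ((z_hasSum 11 (by norm_num)).div_const (2 ^ 11)) (fun n => ?_) rfl
    simp only [Function.comp_apply, even_two_mul, if_true]
    push_cast
    rw [mul_pow, mul_inv]
    ring
  · intro n hn
    rw [if_neg]
    intro he
    obtain ⟨k, rfl⟩ := he
    exact hn ⟨k, by ring⟩

lemma c_sum : HasSum c (2 * (1 / 18 * z 4 * z 7 + 595 / 648 * z 2 * z 9 - 73201 / 46656 * z 11)) := by
  have h := ((((z_hasSum 7 (by norm_num)).mul_left (1 / 9 * z 4)).add
    ((z_hasSum 9 (by norm_num)).mul_left (595 / 324 * z 2))).sub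
    ((z_hasSum 11 (by norm_num)).mul_left (24967 / 23328 + 19 / 8 - 5 / 16 + 1 / 243))).sub
    (even_sum.mul_left (512 / 243))
  refine hs_conv h (fun m => rfl) ?_
  ring

lemma tsum_pnat_nat (f : ℕ → ℝ) (h : f 0 = 0) : ∑' n : ℕ+, f n = ∑' n : ℕ, f n := by
  apply PNat.coe_injective.tsum_eq
  intro n hn
  have : n ≠ 0 := by rintro rfl; exact hn h
  exact ⟨⟨n, Nat.pos_of_ne_zero this⟩, rfl⟩

lemma real_value :
    zetaG2 4 2 2 1 1 1 = 1 / 18 * z 4 * z 7 + 595 / 648 * z 2 * z 9 - 73201 / 46656 * z 11 := by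
  have h := main_split c row
  rw [c_sum.tsum_eq] at h
  have h2 : zetaG2 4 2 2 1 1 1 = ∑' (m : ℕ) (n : ℕ), F m n := by
    rw [← tsum_pnat_nat (fun m => ∑' n : ℕ, F m n) (by simp [F])]
    unfold zetaG2
    refine tsum_congr fun m => ?_
    rw [← tsum_pnat_nat (fun n => F (m : ℕ) n) (by simp [F])]
    rfl
  rw [h2]
  linarith

end G2Proof

theorem zetaG2_422111 :
    (zetaG2 4 2 2 1 1 1 : ℂ) =
      (1 / 18) * riemannZeta 4 * riemannZeta 7 + (595 / 648) * riemannZeta 2 * riemannZeta 9 - (73201 / 46656) * riemannZeta 11 := by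
  have h4 := G2Proof.z_eq 4 (by norm_num)
  have h7 := G2Proof.z_eq 7 (by norm_num)
  have h2 := G2Proof.z_eq 2 (by norm_num)
  have h9 := G2Proof.z_eq 9 (by norm_num)
  have h11 := G2Proof.z_eq 11 (by norm_num)
  push_cast at h4 h7 h2 h9 h11
  rw [h4, h7, h2, h9, h11, G2Proof.real_value]
  push_cast
  ring
end
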